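/- arXiv:1303.5509 — 3 statements merged into one kernel-verified Lean document; each statement's English description precedes it below -/
import Mathlib

section
/- Let q be a prime power, let S_T be a tangent splash of ℓ∞ in PG(2,q³) with centre T, and let m be an order-q-subline of PG(2,q³) containing T and not contained in ℓ∞. Then the number of order-q-subplanes of PG(2,q³) tangent to ℓ∞ that contain m and have tangent splash equal to S_T is q(q²−1). -/
namespace TangentSplashPaper

open Projectivization

/-- The point set of the projective plane `PG(2,K)`. -/
abbrev PGPoint (K : Type*) [Field K] := Projectivization K (Fin 3 → K)

/-- `ℓ` is a line of `PG(2,K)`: the set of points lying in a fixed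
2-dimensional linear subspace. -/
def IsLine {K : Type*} [Field K] (ℓ : Set (PGPoint K)) : Prop :=
  ∃ W : Submodule K (Fin 3 → K), Module.finrank K W = 2 ∧
    ℓ = {P : PGPoint K | P.submodule ≤ W}

/-- The distinguished line `ℓ∞` of `PG(2,K)`: points whose last homogeneous
coordinate vanishes. -/
def linf (K : Type*) [Field K] : Set (PGPoint K) := {P : PGPoint K | P.rep 2 = 0}

/-- The homography of `PG(2,K)` induced by a linear automorphism of `K³`;
as maps of point sets, these are exactly the elements of `PGL(3,K)`. -/
def hmap {K : Type*} [Field K] (f : (Fin 3 → K) ≃ₗ[K] (Fin 3 → K)) :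
    PGPoint K → PGPoint K :=
  Projectivization.map f.toLinearMap f.injective

/-- The base subplane `PG(2,F)`: points admitting homogeneous coordinates in
the subfield `F`. -/
def basePlane (F K : Type*) [Field F] [Field K] [Algebra F K] : Set (PGPoint K) :=
  {P : PGPoint K | ∃ v : Fin 3 → K, ∃ hv : v ≠ 0, P = Projectivization.mk K v hv ∧
    ∀ i, v i ∈ (algebraMap F K).range}

/-- An order-`q`-subplane of `PG(2,K)` (`q = |F|`): an image of `PG(2,F)`
under a homography. -/
def IsSubplane (F : Type*) {K : Type*} [Field F] [Field K] [Algebra F K]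
    (S : Set (PGPoint K)) : Prop :=
  ∃ f : (Fin 3 → K) ≃ₗ[K] (Fin 3 → K), S = hmap f '' basePlane F K

/-- An order-`q`-subline of `PG(2,K)`: the intersection of an order-`q`-subplane
with a line of `PG(2,K)` meeting it in `q+1` points. -/
def IsSubline (F : Type*) {K : Type*} [Field F] [Field K] [Algebra F K] (q : ℕ)
    (b : Set (PGPoint K)) : Prop :=
  ∃ S ℓ : Set (PGPoint K), IsSubplane F S ∧ IsLine ℓ ∧
    (S ∩ ℓ).ncard = q + 1 ∧ b = S ∩ ℓ

/-- The splash of a subplane `π` on `ℓ∞`: all points of `ℓ∞` lying on a line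
of `PG(2,K)` spanned by two points of `π`. -/
def splash {K : Type*} [Field K] (π : Set (PGPoint K)) : Set (PGPoint K) :=
  {X : PGPoint K | X ∈ linf K ∧ ∃ P Q : PGPoint K, P ∈ π ∧ Q ∈ π ∧ P ≠ Q ∧
    ∃ ℓ : Set (PGPoint K), IsLine ℓ ∧ P ∈ ℓ ∧ Q ∈ ℓ ∧ X ∈ ℓ}

/-- `S` is a tangent splash of `ℓ∞` with centre `T`: `S` is the splash of some
order-`q`-subplane meeting `ℓ∞` exactly in the point `T`. -/
def IsTangentSplash (F : Type*) {K : Type*} [Field F] [Field K] [Algebra F K]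
    (S : Set (PGPoint K)) (T : PGPoint K) : Prop :=
  ∃ π : Set (PGPoint K), IsSubplane F π ∧ π ∩ linf K = {T} ∧ S = splash π

/-- The set `t_P`: points of `ℓ∞` lying on the extension of a line of the
subplane `π` through the point `P` (lines of `π` are the lines of `PG(2,K)`
meeting `π` in `q+1` points). -/
def pencilTrace {K : Type*} [Field K] (q : ℕ) (π : Set (PGPoint K))
    (P : PGPoint K) : Set (PGPoint K) :=
  {X : PGPoint K | X ∈ linf K ∧ ∃ ℓ : Set (PGPoint K), IsLine ℓ ∧ P ∈ ℓ ∧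
    (π ∩ ℓ).ncard = q + 1 ∧ X ∈ ℓ}


section helpers
variable {F K : Type} [Field F] [Field K] [Algebra F K]

/-- points of an F-subspace -/
def pts (U : Submodule F (Fin 3 → K)) : Set (PGPoint K) :=
  {P | ∃ u, u ∈ U ∧ ∃ h : u ≠ 0, P = Projectivization.mk K u h}

/-- image of F^3 under f -/
def Ugen (F : Type) {K : Type} [Field F] [Field K] [Algebra F K]
    (f : (Fin 3 → K) ≃ₗ[K] (Fin 3 → K)) : Submodule F (Fin 3 → K) :=
  LinearMap.range ((f.toLinearMap.restrictScalars F) ∘ₗ (Algebra.linearMap F K).compLeft (Fin 3))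

lemma mem_Ugen (f : (Fin 3 → K) ≃ₗ[K] (Fin 3 → K)) (u : Fin 3 → K) :
    u ∈ Ugen F f ↔ ∃ x : Fin 3 → F, f (fun i => algebraMap F K (x i)) = u := by
  unfold Ugen
  rw [LinearMap.mem_range]
  rfl

def Good (U : Submodule F (Fin 3 → K)) : Prop := ∃ f, U = Ugen F f

def LI3 (a b c : Fin 3 → K) : Prop :=
  ∀ x y z : K, x • a + y • b + z • c = 0 → x = 0 ∧ y = 0 ∧ z = 0

lemma mk_mem_pts (U : Submodule F (Fin 3 → K)) (z : Fin 3 → K) (hz : z ≠ 0) :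
    Projectivization.mk K z hz ∈ pts U ↔ ∃ a : K, a ≠ 0 ∧ a • z ∈ U := by
  constructor
  · rintro ⟨u, hu, h, e⟩
    rw [eq_comm, mk_eq_mk_iff'] at e
    obtain ⟨a, rfl⟩ := e
    exact ⟨a, by rintro rfl; simp at h, hu⟩
  · rintro ⟨a, ha, h⟩
    refine ⟨a • z, h, smul_ne_zero ha hz, ?_⟩
    rw [eq_comm, mk_eq_mk_iff']
    exact ⟨a, rfl⟩

lemma isSubplane_iff (π : Set (PGPoint K)) :
    IsSubplane F π ↔ ∃ U : Submodule F (Fin 3 → K), Good U ∧ π = pts U := by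
  have key : ∀ f : (Fin 3 → K) ≃ₗ[K] (Fin 3 → K), hmap f '' basePlane F K = pts (Ugen F f) := by
    intro f
    ext P
    constructor
    · rintro ⟨Q, ⟨v, hv, rfl, hr⟩, rfl⟩
      choose x hx using hr
      refine ⟨f v, ?_, by simpa using hv, ?_⟩
      · rw [mem_Ugen]
        exact ⟨x, by congr 1; ext i; exact hx i⟩
      · simp [hmap, Projectivization.map_mk]
    · rintro ⟨u, hu, h, rfl⟩
      rw [mem_Ugen] at hu
      obtain ⟨x, rfl⟩ := hu
      have hx : (fun i => algebraMap F K (x i)) ≠ 0 := by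
        intro h0; apply h; rw [h0]; simp
      refine ⟨Projectivization.mk K _ hx, ⟨_, hx, rfl, fun i => ⟨x i, rfl⟩⟩, ?_⟩
      simp [hmap, Projectivization.map_mk]
  constructor
  · rintro ⟨f, rfl⟩
    exact ⟨_, ⟨f, rfl⟩, key f⟩
  · rintro ⟨U, ⟨f, rfl⟩, rfl⟩
    exact ⟨f, (key f).symm⟩

lemma mk_mem_linf (z : Fin 3 → K) (hz : z ≠ 0) :
    Projectivization.mk K z hz ∈ linf K ↔ z 2 = 0 := by
  obtain ⟨a, ha⟩ := Projectivization.exists_smul_eq_mk_rep K z hz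
  unfold linf
  rw [Set.mem_ofPred_eq, ← ha]
  simp [Units.smul_def]

lemma exists_rho : ∃ ρ : K →ₗ[F] F, ρ 1 = 1 := by
  obtain ⟨g, hg⟩ := LinearMap.exists_leftInverse_of_injective (Algebra.linearMap F K)
    (LinearMap.ker_eq_bot.2 (algebraMap F K).injective)
  refine ⟨g, ?_⟩
  have := LinearMap.congr_fun hg 1
  simpa using this

/-- retraction -/
lemma Good.retract {U : Submodule F (Fin 3 → K)} (hU : Good U) (ρ : K →ₗ[F] F) :
    ∃ R : (Fin 3 → K) →+ (Fin 3 → K), ∀ a : K, ∀ u ∈ U, R (a • u) = ρ a • u := by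
  obtain ⟨f, rfl⟩ := hU
  refine ⟨(f.toLinearMap.toAddMonoidHom.comp
    (((Algebra.linearMap F K) ∘ₗ ρ).compLeft (Fin 3)).toAddMonoidHom).comp
      f.symm.toLinearMap.toAddMonoidHom, ?_⟩
  intro a u hu
  rw [mem_Ugen] at hu
  obtain ⟨x, rfl⟩ := hu
  simp only [AddMonoidHom.comp_apply, LinearMap.toAddMonoidHom_coe, LinearEquiv.coe_coe, map_smul,
    LinearEquiv.symm_apply_apply]
  rw [← algebraMap_smul K (ρ a), ← map_smul]
  congr 1
  ext i
  simp only [LinearMap.compLeft_apply, Function.comp_apply, LinearMap.comp_apply, Pi.smul_apply,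
    smul_eq_mul, Algebra.linearMap_apply]
  rw [mul_comm, ← Algebra.smul_def, map_smul, smul_eq_mul, map_mul, mul_comm]

lemma Good.comb {U : Submodule F (Fin 3 → K)} (hU : Good U) :
    ∃ ρ : K →ₗ[F] F, ∀ a b : K, ∀ x ∈ U, ∀ y ∈ U, a • x + b • y ∈ U →
      a • x + b • y = ρ a • x + ρ b • y := by
  obtain ⟨ρ, h1⟩ := exists_rho (F := F) (K := K)
  obtain ⟨R, hR⟩ := hU.retract ρ
  refine ⟨ρ, fun a b x hx y hy h => ?_⟩
  have := hR 1 _ h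
  rw [h1, one_smul, one_smul, map_add, hR a x hx, hR b y hy] at this
  exact this.symm

lemma Good.comb3 {U : Submodule F (Fin 3 → K)} (hU : Good U) {a b : K} {x y : Fin 3 → K}
    (hx : x ∈ U) (hy : y ∈ U) (h : a • x + b • y ∈ U) :
    a • x + b • y ∈ Submodule.span F {x, y} := by
  obtain ⟨ρ, hρ⟩ := hU.comb
  rw [hρ a b x hx y hy h, Submodule.mem_span_pair]
  exact ⟨_, _, rfl⟩

lemma good_span {a b c : Fin 3 → K} (h : LI3 a b c) : Good (Submodule.span F {a, b, c}) := by
  have hli : LinearIndependent K ![a, b, c] := by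
    rw [Fintype.linearIndependent_iff]
    intro g hg
    simp [Fin.sum_univ_three] at hg
    obtain ⟨h0, h1, h2⟩ := h _ _ _ hg
    intro i; fin_cases i <;> assumption
  let B := basisOfLinearIndependentOfCardEqFinrank hli (by simp)
  refine ⟨B.equivFun.symm, ?_⟩
  ext u
  rw [mem_Ugen, Submodule.mem_span_triple]
  have hB : ∀ x : Fin 3 → F, B.equivFun.symm (fun i => algebraMap F K (x i))
      = x 0 • a + x 1 • b + x 2 • c := by
    intro x
    rw [Module.Basis.equivFun_symm_apply]
    simp [B, Fin.sum_univ_three, algebraMap_smul]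
  constructor
  · rintro ⟨x, y, z, rfl⟩
    exact ⟨![x, y, z], by rw [hB]; simp⟩
  · rintro ⟨x, rfl⟩
    exact ⟨_, _, _, (hB x).symm⟩

lemma Good.finrank {U : Submodule F (Fin 3 → K)} (hU : Good U) : Module.finrank F U = 3 := by
  obtain ⟨f, rfl⟩ := hU
  unfold Ugen
  rw [LinearMap.finrank_range_of_inj]
  · simp
  · intro x y h
    simp only [LinearMap.comp_apply] at h
    have := f.injective h
    ext i
    exact (algebraMap F K).injective (congrFun this i)

lemma Good.scale {U : Submodule F (Fin 3 → K)} (hU : Good U) {a : K} (ha : a ≠ 0) :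
    ∃ U' : Submodule F (Fin 3 → K), Good U' ∧ pts U' = pts U ∧ ∀ u, u ∈ U' ↔ a • u ∈ U := by
  obtain ⟨f, rfl⟩ := hU
  have key : ∀ u, u ∈ Ugen F (f.trans (LinearEquiv.smulOfNeZero K _ a⁻¹ (inv_ne_zero ha))) ↔
      a • u ∈ Ugen F f := by
    intro u
    rw [mem_Ugen, mem_Ugen]
    apply exists_congr
    intro x
    simp only [LinearEquiv.trans_apply, LinearEquiv.smulOfNeZero_apply]
    exact inv_smul_eq_iff₀ ha
  refine ⟨_, ⟨_, rfl⟩, ?_, key⟩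
  ext P
  induction P using Projectivization.ind with
  | h v hv =>
  rw [mk_mem_pts, mk_mem_pts]
  constructor
  · rintro ⟨b, hb, h⟩
    rw [key, smul_smul] at h
    exact ⟨_, mul_ne_zero ha hb, h⟩
  · rintro ⟨b, hb, h⟩
    refine ⟨a⁻¹ * b, mul_ne_zero (inv_ne_zero ha) hb, ?_⟩
    rw [key, smul_smul, mul_inv_cancel_left₀ ha]
    exact h

def LI2 (a b : Fin 3 → K) : Prop :=
  ∀ x y : K, x • a + y • b = 0 → x = 0 ∧ y = 0

lemma algebraMap_smul' (x : F) (u : Fin 3 → K) : x • u = (algebraMap F K x) • u :=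
  (algebraMap_smul K x u).symm

/-- scale lemma -/
lemma Good.mem_of {U : Submodule F (Fin 3 → K)} (hU : Good U) {t v : Fin 3 → K} (ht : t ∈ U)
    (hli : LI2 t v) (hv : v ≠ 0) (htv : t + v ≠ 0) (h1 : Projectivization.mk K v hv ∈ pts U)
    (h2 : Projectivization.mk K (t + v) htv ∈ pts U) : v ∈ U := by
  rw [mk_mem_pts] at h1 h2
  obtain ⟨a, ha, h1⟩ := h1
  obtain ⟨b, hb, h2⟩ := h2
  obtain ⟨ρ, hρ⟩ := hU.comb
  have e : b • (t + v) = b • t + (b / a) • (a • v) := by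
    rw [smul_smul, div_mul_cancel₀ _ ha, smul_add]
  rw [e] at h2
  have h3 := hρ b (b / a) t ht _ h1 h2
  rw [algebraMap_smul' (ρ b), algebraMap_smul' (ρ (b / a)), smul_smul, smul_smul] at h3
  obtain ⟨e1, e2⟩ := hli (b - algebraMap F K (ρ b)) (b / a * a - algebraMap F K (ρ (b / a)) * a) (by
    rw [sub_smul, sub_smul]
    rw [← sub_eq_zero] at h3
    rw [← h3]; abel)
  have e3 : b / a = algebraMap F K (ρ (b / a)) := by
    rw [← sub_mul] at e2
    rcases mul_eq_zero.1 e2 with h | h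
    · exact sub_eq_zero.1 h
    · exact absurd h ha
  have e4 : v = (ρ (b / a) / ρ b) • (a • v) := by
    rw [algebraMap_smul', map_div₀, ← e3, ← sub_eq_zero.1 e1, smul_smul]
    have : b / a / b * a = 1 := by field_simp
    rw [this, one_smul]
  rw [e4]
  exact U.smul_mem _ h1

lemma Good.extend2 [Finite K] {U : Submodule F (Fin 3 → K)} (hU : Good U) {t v : Fin 3 → K}
    (ht : t ∈ U) (hv : v ∈ U) (hli : LI2 t v) :
    ∃ w, U = Submodule.span F {t, v, w} ∧ LI3 t v w := by
  have : Module.Finite F (Fin 3 → K) := Module.Finite.of_finite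
  have hle : Submodule.span F {t, v} ≤ U := by
    rw [Submodule.span_le]; rintro x (rfl | rfl) <;> assumption
  have hlt : ∃ w ∈ U, w ∉ Submodule.span F {t, v} := by
    by_contra! hcon
    have h1 : U = Submodule.span F {t, v} := le_antisymm hcon hle
    have h2 := hU.finrank
    classical
    have h3 := finrank_span_finset_le_card (R := F) ({t, v} : Finset (Fin 3 → K))
    have h4 := Finset.card_le_two (a := t) (b := v)
    have h5 : (({t, v} : Finset (Fin 3 → K)) : Set (Fin 3 → K)) = {t, v} := by simp
    unfold Set.finrank at h3
    rw [h5, ← h1, h2] at h3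
    omega
  obtain ⟨w, hw, hwn⟩ := hlt
  have hLI : LI3 t v w := by
    intro x y z h
    by_cases hz : z = 0
    · subst hz
      simp at h
      obtain ⟨h1, h2⟩ := hli _ _ h
      exact ⟨h1, h2, rfl⟩
    · exfalso
      have e : w = (-x / z) • t + (-y / z) • v := by
        have : z • w = z • ((-x / z) • t + (-y / z) • v) := by
          rw [smul_add, smul_smul, smul_smul, mul_div_cancel₀ _ hz, mul_div_cancel₀ _ hz,
            ← sub_eq_zero, ← h, neg_smul, neg_smul]
          abel
        exact smul_right_injective _ hz this
      apply hwn
      rw [e] at hw ⊢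
      exact hU.comb3 ht hv hw
  refine ⟨w, ?_, hLI⟩
  symm
  apply Submodule.eq_of_le_of_finrank_eq
  · rw [Submodule.span_le]; rintro x (rfl | rfl | rfl) <;> assumption
  · rw [hU.finrank, (good_span hLI).finrank]

lemma Good.extend1 [Finite K] {U : Submodule F (Fin 3 → K)} (hU : Good U) {t : Fin 3 → K}
    (ht : t ∈ U) (ht0 : t ≠ 0) :
    ∃ v w, U = Submodule.span F {t, v, w} ∧ LI3 t v w := by
  have : Module.Finite F (Fin 3 → K) := Module.Finite.of_finite
  have hle : Submodule.span F {t} ≤ U := by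
    rw [Submodule.span_le]; rintro x rfl; assumption
  have hlt : ∃ w ∈ U, w ∉ Submodule.span F {t} := by
    by_contra! hcon
    have h1 : U = Submodule.span F {t} := le_antisymm hcon hle
    have h2 := hU.finrank
    have h3 := finrank_span_le_card (R := F) ({t} : Set (Fin 3 → K))
    rw [← h1, h2] at h3
    simp at h3
  obtain ⟨v, hv, hvn⟩ := hlt
  have hLI : LI2 t v := by
    intro x z h
    by_cases hz : z = 0
    · subst hz
      simp [ht0] at h
      exact ⟨h, rfl⟩
    · exfalso
      have e : v = (-x / z) • t + (0 : K) • t := by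
        have : z • v = z • ((-x / z) • t) := by
          rw [smul_smul, mul_div_cancel₀ _ hz,
            ← sub_eq_zero, ← h, neg_smul]
          abel
        rw [zero_smul, add_zero]
        exact smul_right_injective _ hz this
      apply hvn
      rw [e] at hv ⊢
      simpa using hU.comb3 ht ht hv
  obtain ⟨w, h⟩ := hU.extend2 ht hv hLI
  exact ⟨v, w, h⟩

/-- collinearity -/
lemma line_iff {p r z : Fin 3 → K} (hp : p ≠ 0) (hr : r ≠ 0) (hz : z ≠ 0)
    (hpr : Projectivization.mk K p hp ≠ Projectivization.mk K r hr) :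
    (∃ ℓ : Set (PGPoint K), IsLine ℓ ∧ Projectivization.mk K p hp ∈ ℓ ∧
      Projectivization.mk K r hr ∈ ℓ ∧ Projectivization.mk K z hz ∈ ℓ) ↔
      ∃ a b : K, a • p + b • r = z := by
  have hli : LinearIndependent K ![p, r] := by
    rw [LinearIndependent.pair_iff' hp]
    intro a ha
    apply hpr
    rw [eq_comm, mk_eq_mk_iff']
    exact ⟨a, ha⟩
  have hfr : Module.finrank K (Submodule.span K {p, r}) = 2 := by
    have h := finrank_span_eq_card hli
    have h5 : Set.range ![p, r] = {p, r} := by simp [Set.pair_comm]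
    rw [h5] at h
    simpa using h
  constructor
  · rintro ⟨ℓ, ⟨W, hW, rfl⟩, h1, h2, h3⟩
    simp only [Set.mem_ofPred_eq, submodule_mk, Submodule.span_singleton_le_iff_mem] at h1 h2 h3
    have : Submodule.span K {p, r} = W := by
      apply Submodule.eq_of_le_of_finrank_eq
      · rw [Submodule.span_le]; rintro x (rfl | rfl) <;> assumption
      · rw [hfr, hW]
    rw [← this] at h3
    exact Submodule.mem_span_pair.1 h3
  · rintro h
    refine ⟨_, ⟨_, hfr, rfl⟩, ?_, ?_, ?_⟩ <;>
      simp only [Set.mem_ofPred_eq, submodule_mk, Submodule.span_singleton_le_iff_mem]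
    · exact Submodule.subset_span (by simp)
    · exact Submodule.subset_span (by simp)
    · exact Submodule.mem_span_pair.2 h

lemma splash_iff {t b c : Fin 3 → K} (h : LI3 t b c) (ht : t 2 = 0)
    (hF : ∀ x y : F, x • b 2 + y • c 2 = 0 → x = 0 ∧ y = 0) (z : Fin 3 → K) (hz : z ≠ 0) :
    Projectivization.mk K z hz ∈ splash (pts (Submodule.span F {t, b, c})) ↔
      (∃ k : K, z = k • t) ∨
      ∃ k : K, ∃ x y : F, z = k • (c 2 • b - b 2 • c + (x • c 2 + y • b 2) • t) := by
  have ht0 : t ≠ 0 := by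
    rintro rfl
    have := h 1 0 0 (by simp)
    simp at this
  have hmem : ∀ x y z : F, x • t + y • b + z • c ∈ Submodule.span F {t, b, c} := by
    intro x y z
    rw [Submodule.mem_span_triple]
    exact ⟨x, y, z, rfl⟩
  constructor
  · rintro ⟨hzl, P, Q, ⟨p, hp, hp0, rfl⟩, ⟨r, hr, hr0, rfl⟩, hne, hl⟩
    rw [mk_mem_linf] at hzl
    rw [line_iff hp0 hr0 hz hne] at hl
    obtain ⟨α, β, rfl⟩ := hl
    rw [Submodule.mem_span_triple] at hp hr
    obtain ⟨p0, p1, p2, rfl⟩ := hp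
    obtain ⟨r0, r1, r2, rfl⟩ := hr
    simp only [Pi.add_apply, Pi.smul_apply, ht, smul_zero, zero_add] at hzl
    by_cases hD : p1 * r2 - p2 * r1 = 0
    · left
      have key : α * algebraMap F K p1 + β * algebraMap F K r1 = 0 ∧
          α * algebraMap F K p2 + β * algebraMap F K r2 = 0 := by
        have hD' : algebraMap F K p1 * algebraMap F K r2 - algebraMap F K p2 * algebraMap F K r1
          = 0 := by rw [← map_mul, ← map_mul, ← map_sub, hD, map_zero]
        simp only [smul_eq_mul] at hzl
        simp only [Algebra.smul_def] at hzl
        have hp' : (p1 = 0 ∧ p2 = 0) ∨ p1 • b 2 + p2 • c 2 ≠ 0 := by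
          by_cases h0 : p1 • b 2 + p2 • c 2 = 0
          · exact Or.inl (hF _ _ h0)
          · exact Or.inr h0
        have hr' : (r1 = 0 ∧ r2 = 0) ∨ r1 • b 2 + r2 • c 2 ≠ 0 := by
          by_cases h0 : r1 • b 2 + r2 • c 2 = 0
          · exact Or.inl (hF _ _ h0)
          · exact Or.inr h0
        simp only [Algebra.smul_def] at hp' hr'
        rcases hp' with ⟨rfl, rfl⟩ | hp'
        · rcases hr' with ⟨rfl, rfl⟩ | hr'
          · simp
          · simp only [map_zero, zero_mul, add_zero, mul_zero, zero_add] at hzl ⊢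
            rcases mul_eq_zero.1 hzl with h1 | h1
            · simp [h1]
            · exact absurd h1 hr'
        · constructor
          · apply mul_right_cancel₀ hp'
            linear_combination (algebraMap F K p1) * hzl - β * c 2 * hD'
          · apply mul_right_cancel₀ hp'
            linear_combination (algebraMap F K p2) * hzl + β * b 2 * hD'
      refine ⟨α * algebraMap F K p0 + β * algebraMap F K r0, ?_⟩
      ext i
      simp only [Pi.add_apply, Pi.smul_apply, smul_eq_mul]
      simp only [Algebra.smul_def]
      linear_combination b i * key.1 + c i * key.2
    · right
      have hD' : algebraMap F K p1 * algebraMap F K r2 - algebraMap F K p2 * algebraMap F K r1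
          ≠ 0 := by
        rw [← map_mul, ← map_mul, ← map_sub]
        exact (map_ne_zero (algebraMap F K)).2 hD
      have hp' : p1 • b 2 + p2 • c 2 ≠ 0 := by
        intro h0
        obtain ⟨rfl, rfl⟩ := hF _ _ h0
        simp at hD
      have hr' : r1 • b 2 + r2 • c 2 ≠ 0 := by
        intro h0
        obtain ⟨rfl, rfl⟩ := hF _ _ h0
        simp at hD
      have hzl' := hzl
      simp only [smul_eq_mul] at hzl
      simp only [Algebra.smul_def] at hzl hp' hr'
      obtain ⟨κ, hκ⟩ : ∃ κ, α = κ * (algebraMap F K r1 * b 2 + algebraMap F K r2 * c 2) :=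
        ⟨α / _, by rw [div_mul_cancel₀ _ hr']⟩
      have hβ : β = - κ * (algebraMap F K p1 * b 2 + algebraMap F K p2 * c 2) := by
        apply mul_right_cancel₀ hr'
        rw [hκ] at hzl
        linear_combination hzl
      refine ⟨κ * (algebraMap F K p1 * algebraMap F K r2 - algebraMap F K p2 * algebraMap F K r1),
        (r2 * p0 - p2 * r0) / (p1 * r2 - p2 * r1), (r1 * p0 - p1 * r0) / (p1 * r2 - p2 * r1), ?_⟩
      rw [hκ, hβ]
      ext i
      simp only [Pi.add_apply, Pi.smul_apply, Pi.sub_apply, smul_eq_mul]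
      simp only [Algebra.smul_def, map_div₀, map_sub, map_mul]
      obtain ⟨D, hDdef⟩ : ∃ D, D = algebraMap F K p1 * algebraMap F K r2 -
        algebraMap F K p2 * algebraMap F K r1 := ⟨_, rfl⟩
      rw [← hDdef] at hD' ⊢
      field_simp
      rw [hDdef]
      ring
  · intro hor
    rcases hor with ⟨k, rfl⟩ | ⟨k, x, y, rfl⟩
    · have hb0 : b ≠ 0 := by
        rintro rfl
        have := h 0 1 0 (by simp)
        simp at this
      have hne : Projectivization.mk K t ht0 ≠ Projectivization.mk K b hb0 := by
        intro e
        rw [mk_eq_mk_iff'] at e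
        obtain ⟨a, ha⟩ := e
        have := h 1 (-a) 0 (by rw [← ha]; simp)
        simp at this
      refine ⟨?_, _, _, ⟨t, ?_, ht0, rfl⟩, ⟨b, ?_, hb0, rfl⟩, hne, ?_⟩
      · rw [mk_mem_linf]; simp [ht]
      · exact Submodule.subset_span (by simp)
      · exact Submodule.subset_span (by simp)
      · rw [line_iff ht0 hb0 hz hne]
        exact ⟨k, 0, by simp⟩
    · set p : Fin 3 → K := x • t + (1 : F) • b + (0 : F) • c with hp
      set r : Fin 3 → K := (-y) • t + (0 : F) • b + (1 : F) • c with hr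
      have hp0 : p ≠ 0 := by
        intro h0
        have := h (algebraMap F K x) 1 0 (by rw [← h0, hp]; simp)
        simp at this
      have hr0 : r ≠ 0 := by
        intro h0
        have := h (algebraMap F K (-y)) 0 1 (by rw [← h0, hr]; rw [algebraMap_smul]; simp)
        simp at this
      have hne : Projectivization.mk K p hp0 ≠ Projectivization.mk K r hr0 := by
        intro e
        rw [mk_eq_mk_iff'] at e
        obtain ⟨a, ha⟩ := e
        have := h (algebraMap F K x - a * algebraMap F K (-y)) 1 (-a) (by
          rw [← sub_eq_zero] at ha
          have ha' := neg_eq_zero.2 ha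
          rw [← ha', hp, hr]
          ext i
          simp [Algebra.smul_def]
          ring)
        simp at this
      refine ⟨?_, _, _, ⟨p, hmem _ _ _, hp0, rfl⟩, ⟨r, hmem _ _ _, hr0, rfl⟩, hne, ?_⟩
      · rw [mk_mem_linf]; simp [ht]; right; ring
      · rw [line_iff hp0 hr0 hz hne]
        refine ⟨k * c 2, -k * b 2, ?_⟩
        ext i
        simp [hp, hr, Algebra.smul_def]
        ring

/-- a frame of K^3 adapted to the line at infinity -/
structure Frame (t s v : Fin 3 → K) (X Y : (Fin 3 → K) →ₗ[K] K) : Prop where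
  ex : ∀ z, z = X z • t + Y z • s + z 2 • v
  t2 : t 2 = 0
  s2 : s 2 = 0
  v2 : v 2 = 1
  Xt : X t = 1
  Xs : X s = 0
  Xv : X v = 0
  Yt : Y t = 0
  Ys : Y s = 1
  Yv : Y v = 0

lemma exists_frame {t v : Fin 3 → K} (ht : t 2 = 0) (ht0 : t ≠ 0) (hv : v 2 = 1) :
    ∃ s X Y, Frame t s v X Y := by
  have : ∃ s0 s1 : K, t 0 * s1 - t 1 * s0 = 1 := by
    by_cases h0 : t 0 = 0
    · have h1 : t 1 ≠ 0 := by
        intro h1; apply ht0; ext i; fin_cases i <;> simpa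
      exact ⟨-(t 1)⁻¹, 0, by field_simp; simp⟩
    · exact ⟨0, (t 0)⁻¹, by field_simp; simp⟩
  obtain ⟨s0, s1, hs⟩ := this
  let p (i : Fin 3) : (Fin 3 → K) →ₗ[K] K := LinearMap.proj i
  refine ⟨![s0, s1, 0], s1 • (p 0 - v 0 • p 2) - s0 • (p 1 - v 1 • p 2),
    t 0 • (p 1 - v 1 • p 2) - t 1 • (p 0 - v 0 • p 2), ?_⟩
  constructor
  · intro z
    ext i
    simp only [Pi.add_apply, Pi.smul_apply, smul_eq_mul]
    fin_cases i
    · simp [p]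
      linear_combination (v 0 * z 2 - z 0) * hs
    · simp [p]
      linear_combination (v 1 * z 2 - z 1) * hs
    · simp [ht, hv]
  all_goals simp [p, ht, hv]
  all_goals try linear_combination hs
  all_goals try ring

lemma Frame.ext {t s v : Fin 3 → K} {X Y} (f : Frame t s v X Y) {z z' : Fin 3 → K}
    (h1 : X z = X z') (h2 : Y z = Y z') (h3 : z 2 = z' 2) : z = z' := by
  rw [f.ex z, f.ex z', h1, h2, h3]

/-- description of the splash -/
def InS (X Y : (Fin 3 → K) →ₗ[K] K) (s0 : K) (B : Submodule F K) (z : Fin 3 → K) : Prop :=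
  z 2 = 0 ∧ (Y z = 0 ∨ X z / Y z - s0 ∈ B)

lemma Frame.splash {t s v : Fin 3 → K} {X Y} (f : Frame t s v X Y) {b c : Fin 3 → K}
    (h : LI3 t b c) (hF : ∀ x y : F, x • b 2 + y • c 2 = 0 → x = 0 ∧ y = 0) :
    c 2 * Y b - b 2 * Y c ≠ 0 ∧ 
    ∀ (z : Fin 3 → K) (hz : z ≠ 0),
    (Projectivization.mk K z hz ∈ splash (pts (Submodule.span F {t, b, c})) ↔
      InS X Y ((c 2 * X b - b 2 * X c) / (c 2 * Y b - b 2 * Y c))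
        (Submodule.span F {b 2 / (c 2 * Y b - b 2 * Y c), c 2 / (c 2 * Y b - b 2 * Y c)}) z) := by
  set d := c 2 * Y b - b 2 * Y c with hd
  set n := c 2 * X b - b 2 * X c with hn
  have hd0 : d ≠ 0 := by
    intro h0
    have := h (-n) (c 2) (-b 2) (by
      apply f.ext
      · simp [f.Xt, hn]
      · simp [f.Yt]; linear_combination h0
      · simp [f.t2]; ring)
    have h2 := hF 0 1 (by simp [this.2.1])
    simp at h2
  refine ⟨hd0, fun z hz => ?_⟩
  rw [splash_iff h f.t2 hF]
  unfold InS
  constructor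
  · rintro (⟨k, rfl⟩ | ⟨k, x, y, rfl⟩)
    · simp [f.t2, f.Yt]
    · have hk : k ≠ 0 := by rintro rfl; simp at hz
      refine ⟨by simp [f.t2]; right; ring, Or.inr ?_⟩
      rw [Submodule.mem_span_pair]
      refine ⟨y, x, ?_⟩
      have hY : Y (k • (c 2 • b - b 2 • c + (x • c 2 + y • b 2) • t)) = k * d := by
        simp [f.Yt, hd]
      have hX : X (k • (c 2 • b - b 2 • c + (x • c 2 + y • b 2) • t)) =
          k * (n + (x • c 2 + y • b 2)) := by
        simp [f.Xt, hn]; ring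
      rw [hX, hY]
      simp only [Algebra.smul_def]
      field_simp
      ring
  · rintro ⟨hz2, hz0 | hzB⟩
    · left
      refine ⟨X z, ?_⟩
      have := f.ex z
      rw [hz2, hz0] at this
      simpa using this
    · by_cases hz0 : Y z = 0
      · left
        refine ⟨X z, ?_⟩
        have := f.ex z
        rw [hz2, hz0] at this
        simpa using this
      right
      rw [Submodule.mem_span_pair] at hzB
      obtain ⟨y, x, hxy⟩ := hzB
      refine ⟨Y z / d, x, y, ?_⟩
      apply f.ext
      · simp only [map_smul, map_add, map_sub, f.Xt, smul_eq_mul]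
        rw [← hn]
        simp only [Algebra.smul_def] at hxy ⊢
        field_simp at hxy ⊢
        linear_combination -hxy
      · simp only [map_smul, map_add, map_sub, f.Yt, smul_eq_mul]
        rw [← hd]
        field_simp
        simp
      · simp [hz2, f.t2]; right; ring

lemma Frame.inS_congr {t s v : Fin 3 → K} {X Y} (f : Frame t s v X Y) (s0 s1 : K)
    (B B' : Submodule F K) :
    (∀ z, z ≠ 0 → (InS X Y s0 B z ↔ InS X Y s1 B' z)) ↔ B = B' ∧ s1 - s0 ∈ B' := by
  have hx : ∀ x : K, ∀ s0 : K, ∀ B : Submodule F K, InS X Y s0 B (x • t + s) ↔ x - s0 ∈ B := by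
    intro x s0 B
    simp [InS, f.t2, f.s2, f.Yt, f.Ys, f.Xt, f.Xs]
  have hx0 : ∀ x : K, x • t + s ≠ 0 := by
    intro x h0
    have := congrArg Y h0
    simp [f.Yt, f.Ys] at this
  constructor
  · intro h
    have h' : ∀ x, x - s0 ∈ B ↔ x - s1 ∈ B' := by
      intro x
      rw [← hx, ← hx]
      exact h _ (hx0 x)
    have h1 : s0 - s1 ∈ B' := (h' s0).1 (by simp)
    refine ⟨?_, by rw [← neg_sub]; exact B'.neg_mem h1⟩
    ext x
    have h2 := h' (x + s0)
    rw [add_sub_cancel_right] at h2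
    rw [h2, add_sub_assoc]
    exact B'.add_mem_iff_left h1
  · rintro ⟨rfl, h⟩ z _
    unfold InS
    have : X z / Y z - s0 = (X z / Y z - s1) + (s1 - s0) := by ring
    rw [this, B.add_mem_iff_left h]

lemma tangent_iff {t b c : Fin 3 → K} (h : LI3 t b c) (ht : t 2 = 0) (ht0 : t ≠ 0) :
    pts (Submodule.span F {t, b, c}) ∩ linf K = {Projectivization.mk K t ht0} ↔
      ∀ x y : F, x • b 2 + y • c 2 = 0 → x = 0 ∧ y = 0 := by
  constructor
  · intro hP x y hxy
    have hu : ∃ a : K, x • b + y • c = a • t := by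
      by_cases hu0 : x • b + y • c = 0
      · exact ⟨0, by simp [hu0]⟩
      · have hm : Projectivization.mk K _ hu0 ∈ pts (Submodule.span F {t, b, c}) ∩ linf K := by
          refine ⟨⟨_, ?_, hu0, rfl⟩, ?_⟩
          · rw [Submodule.mem_span_triple]
            exact ⟨0, x, y, by simp⟩
          · rw [mk_mem_linf]
            exact hxy
        rw [hP, Set.mem_singleton_iff, mk_eq_mk_iff'] at hm
        obtain ⟨a, ha⟩ := hm
        exact ⟨a, ha.symm⟩
    obtain ⟨a, ha⟩ := hu
    have := h (-a) (algebraMap F K x) (algebraMap F K y) (by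
      rw [algebraMap_smul, algebraMap_smul, add_assoc, ha]; simp)
    simpa using this.2
  · intro hF
    ext P
    rw [Set.mem_singleton_iff]
    constructor
    · rintro ⟨⟨u, hu, hu0, rfl⟩, hl⟩
      rw [mk_mem_linf] at hl
      rw [Submodule.mem_span_triple] at hu
      obtain ⟨x, y, z, rfl⟩ := hu
      simp only [Pi.add_apply, Pi.smul_apply, ht, smul_zero, zero_add] at hl
      obtain ⟨rfl, rfl⟩ := hF _ _ hl
      rw [mk_eq_mk_iff']
      exact ⟨algebraMap F K x, by simp⟩
    · rintro rfl
      refine ⟨⟨t, Submodule.subset_span (by simp), ht0, rfl⟩, ?_⟩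
      rw [mk_mem_linf]; exact ht

lemma Frame.li3_iff {t s v : Fin 3 → K} {X Y} (f : Frame t s v X Y) (w : Fin 3 → K) :
    LI3 t w v ↔ Y w ≠ 0 := by
  constructor
  · intro h h0
    have := h (- X w) 1 (- w 2) (by
      apply f.ext
      · simp [f.Xt, f.Xv]
      · simp [f.Yt, f.Yv, h0]
      · simp [f.t2, f.v2])
    simp at this
  · intro h x y z e
    have eY := congrArg Y e
    simp [f.Yt, f.Yv, h] at eY
    subst eY
    have eX := congrArg X e
    simp [f.Xt, f.Xv] at eX
    have e2 := congrFun e 2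
    simp [f.t2, f.v2] at e2
    exact ⟨eX, rfl, e2⟩

lemma subline_form {q : ℕ} {m : Set (PGPoint K)} {T : PGPoint K} (hm : IsSubline F q m)
    (hTm : T ∈ m) (hT : T ∈ linf K) (hmn : ¬ m ⊆ linf K) :
    ∃ t v : Fin 3 → K, ∃ ht0 : t ≠ 0, t 2 = 0 ∧ v 2 = 1 ∧ T = Projectivization.mk K t ht0 ∧
      m = pts (Submodule.span F {t, v}) := by
  obtain ⟨S', ℓ, hS', ⟨W, hW, rfl⟩, -, rfl⟩ := hm
  rw [isSubplane_iff] at hS'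
  obtain ⟨U, hU, rfl⟩ := hS'
  rw [Set.not_subset] at hmn
  obtain ⟨P, hP, hPl⟩ := hmn
  obtain ⟨⟨p, hpU, hp0, rfl⟩, hPW⟩ := hP
  obtain ⟨⟨t', htU, ht0', rfl⟩, hTW⟩ := hTm
  rw [mk_mem_linf] at hPl hT
  obtain ⟨U', hU', hpts, hmem⟩ := hU.scale hPl
  rw [← hpts]
  simp only [Set.mem_ofPred_eq, submodule_mk, Submodule.span_singleton_le_iff_mem] at hPW hTW
  have ht0 : (p 2)⁻¹ • t' ≠ 0 := smul_ne_zero (inv_ne_zero hPl) ht0'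
  have hv0 : (p 2)⁻¹ • p ≠ 0 := smul_ne_zero (inv_ne_zero hPl) hp0
  have ht : (p 2)⁻¹ • t' ∈ U' := by rw [hmem, smul_inv_smul₀ hPl]; exact htU
  have hv : (p 2)⁻¹ • p ∈ U' := by rw [hmem, smul_inv_smul₀ hPl]; exact hpU
  have ht2 : ((p 2)⁻¹ • t') 2 = 0 := by simp [hT]
  have hv2 : ((p 2)⁻¹ • p) 2 = 1 := by simp [hPl]
  have htW : (p 2)⁻¹ • t' ∈ W := W.smul_mem _ hTW
  have hvW : (p 2)⁻¹ • p ∈ W := W.smul_mem _ hPW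
  refine ⟨_, _, ht0, ht2, hv2, ?_, ?_⟩
  · rw [eq_comm, mk_eq_mk_iff']
    exact ⟨_, rfl⟩
  · generalize (p 2)⁻¹ • t' = t at *
    generalize (p 2)⁻¹ • p = v at *
    have hne : Projectivization.mk K t ht0 ≠ Projectivization.mk K v hv0 := by
      intro e
      rw [mk_eq_mk_iff'] at e
      obtain ⟨a, rfl⟩ := e
      simp [hv2] at ht2
      simp [ht2] at ht0
    ext P
    constructor
    · rintro ⟨⟨u, hu, hu0, rfl⟩, huW⟩
      obtain ⟨a, b, hab⟩ := (line_iff ht0 hv0 hu0 hne).1 ⟨{P | P.submodule ≤ W}, ⟨W, hW, rfl⟩, by simpa,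
        by simpa, huW⟩
      refine ⟨u, ?_, hu0, rfl⟩
      rw [← hab] at hu ⊢
      exact hU'.comb3 ht hv hu
    · rintro ⟨u, hu, hu0, rfl⟩
      rw [Submodule.mem_span_pair] at hu
      obtain ⟨x, y, rfl⟩ := hu
      refine ⟨⟨_, U'.add_mem (U'.smul_mem _ ht) (U'.smul_mem _ hv), hu0, rfl⟩, ?_⟩
      simp only [Set.mem_ofPred_eq, submodule_mk, Submodule.span_singleton_le_iff_mem]
      rw [algebraMap_smul' x, algebraMap_smul' y]
      exact W.add_mem (W.smul_mem _ htW) (W.smul_mem _ hvW)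

lemma card_fib {α β : Type*} (A : Set α) (hA : A.Finite) (g : α → β) (k : ℕ)
    (h : ∀ a ∈ A, {a' | a' ∈ A ∧ g a' = g a}.ncard = k) : A.ncard = (g '' A).ncard * k := by
  classical
  lift A to Finset α using hA
  rw [Set.ncard_coe_finset, ← Finset.coe_image, Set.ncard_coe_finset,
    Finset.card_eq_sum_card_image g A, ← smul_eq_mul, ← Finset.sum_const]
  apply Finset.sum_congr rfl
  intro b hb
  obtain ⟨a, ha, rfl⟩ := Finset.mem_image.1 hb
  rw [← h a ha, ← Set.ncard_coe_finset]
  congr 1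
  ext x
  simp

/-- parameters -/
def Wset (X Y : (Fin 3 → K) →ₗ[K] K) (s0 : K) (B : Submodule F K) : Set (Fin 3 → K) :=
  {w | Y w ≠ 0 ∧ (∀ x y : F, x • w 2 + y • (1 : K) = 0 → x = 0 ∧ y = 0) ∧
    Submodule.span F {w 2 / Y w, 1 / Y w} = B ∧ s0 - X w / Y w ∈ B}

lemma Frame.card_Wset [Fintype F] [Fintype K] {t s v : Fin 3 → K} {X Y} (f : Frame t s v X Y)
    (s0 : K) (B : Submodule F K) (hB : Module.finrank F B = 2) {q : ℕ} (hq : Fintype.card F = q) :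
    (Wset X Y s0 B).ncard = (q ^ 2 - 1) * (q ^ 2 - q) * q ^ 2 := by
  classical
  let Φ : {r : Fin 2 → B // LinearIndependent F r} × B → (Fin 3 → K) := fun p =>
    (((p.1.1 0 : B) : K)⁻¹ * (s0 - (p.2 : K))) • t + ((p.1.1 0 : B) : K)⁻¹ • s +
      (((p.1.1 0 : B) : K)⁻¹ * ((p.1.1 1 : B) : K)) • v
  have hX : ∀ p, X (Φ p) = ((p.1.1 0 : B) : K)⁻¹ * (s0 - (p.2 : K)) := by
    intro p; simp [Φ, f.Xt, f.Xs, f.Xv]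
  have hY : ∀ p, Y (Φ p) = ((p.1.1 0 : B) : K)⁻¹ := by
    intro p; simp [Φ, f.Yt, f.Ys, f.Yv]
  have h2 : ∀ p, (Φ p) 2 = ((p.1.1 0 : B) : K)⁻¹ * ((p.1.1 1 : B) : K) := by
    intro p; simp [Φ, f.t2, f.s2, f.v2]
  have hne : ∀ p : {r : Fin 2 → B // LinearIndependent F r}, ((p.1 0 : B) : K) ≠ 0 := by
    intro p h0
    exact p.2.ne_zero 0 (Subtype.ext h0)
  have hinj : Function.Injective Φ := by
    intro p p' hpp
    have e0 : ((p.1.1 0 : B) : K) = (p'.1.1 0 : B) := by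
      have := congrArg Y hpp
      rw [hY, hY] at this
      exact inv_injective this
    have e1 : ((p.1.1 1 : B) : K) = (p'.1.1 1 : B) := by
      have := congrFun hpp 2
      rw [h2, h2, e0] at this
      exact mul_left_cancel₀ (inv_ne_zero (hne _)) this
    have e2 : (p.2 : K) = p'.2 := by
      have := congrArg X hpp
      rw [hX, hX, e0] at this
      have := mul_left_cancel₀ (inv_ne_zero (hne _)) this
      exact sub_right_injective this
    apply Prod.ext
    · apply Subtype.ext
      funext i
      fin_cases i
      · exact Subtype.ext e0
      · exact Subtype.ext e1
    · exact Subtype.ext e2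
  have hrange : Set.range Φ = Wset X Y s0 B := by
    ext w
    constructor
    · rintro ⟨p, rfl⟩
      have hb := hne p.1
      have hspan : Submodule.span F {((p.1.1 1 : B) : K), ((p.1.1 0 : B) : K)} = B := by
        apply Submodule.eq_of_le_of_finrank_eq
        · rw [Submodule.span_le]; rintro x (rfl | rfl) <;> simp
        · have hli : LinearIndependent F (B.subtype ∘ p.1.1) :=
            p.1.2.map' B.subtype (Submodule.ker_subtype B)
          have h := finrank_span_eq_card hli
          have h5 : Set.range (B.subtype ∘ p.1.1) = {((p.1.1 1 : B) : K), ((p.1.1 0 : B) : K)} := by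
            ext x
            simp [Fin.exists_fin_two, or_comm, eq_comm]
          rw [h5] at h
          rw [h, hB]; simp
      refine ⟨?_, ?_, ?_, ?_⟩
      · rw [hY]; exact inv_ne_zero hb
      · intro x y hxy
        rw [h2] at hxy
        have hli := p.1.2
        rw [Fintype.linearIndependent_iff] at hli
        have h3 := hli ![y, x] (by
          apply Subtype.ext
          simp [Fin.sum_univ_two]
          simp only [Algebra.smul_def] at hxy ⊢
          field_simp at hxy
          linear_combination hxy)
        exact ⟨by simpa using h3 1, by simpa using h3 0⟩
      · rw [hY, h2]
        have e1 : ((p.1.1 0 : B) : K)⁻¹ * ((p.1.1 1 : B) : K) / ((p.1.1 0 : B) : K)⁻¹ =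
          ((p.1.1 1 : B) : K) := by field_simp
        have e2 : 1 / ((p.1.1 0 : B) : K)⁻¹ = ((p.1.1 0 : B) : K) := by field_simp
        rw [e1, e2, hspan]
      · rw [hX, hY]
        have e1 : s0 - ((p.1.1 0 : B) : K)⁻¹ * (s0 - (p.2 : K)) / ((p.1.1 0 : B) : K)⁻¹ =
          p.2 := by field_simp; ring
        rw [e1]
        exact p.2.2
    · rintro ⟨hw0, hwF, hwB, hws⟩
      have m1 : w 2 / Y w ∈ B := by rw [← hwB]; exact Submodule.subset_span (by simp)
      have m0 : 1 / Y w ∈ B := by rw [← hwB]; exact Submodule.subset_span (by simp)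
      have hli : LinearIndependent F ![(⟨1 / Y w, m0⟩ : B), ⟨w 2 / Y w, m1⟩] := by
        rw [LinearIndependent.pair_iff]
        intro y x h
        have h' := congrArg Subtype.val h
        simp only [Submodule.coe_add, Submodule.coe_smul, Submodule.coe_zero] at h'
        have := hwF x y (by
          simp only [Algebra.smul_def] at h' ⊢
          field_simp at h'
          linear_combination h')
        exact ⟨this.2, this.1⟩
      refine ⟨⟨⟨_, hli⟩, ⟨_, hws⟩⟩, ?_⟩
      apply f.ext
      · rw [hX]
        simp
        field_simp
      · rw [hY]; simp
      · rw [h2]; simp; field_simp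
  rw [← hrange, ← Set.image_univ, Set.ncard_image_of_injective _ hinj, Set.ncard_univ,
    Nat.card_prod, card_linearIndependent (by rw [hB]), hB, Fin.prod_univ_two, hq]
  rw [Nat.card_eq_fintype_card (α := B), Module.card_eq_pow_finrank (K := F), hB, hq]
  simp

lemma card_span3 [Fintype F] [Finite K] {U : Submodule F (Fin 3 → K)} (hU : Good U)
    {q : ℕ} (hq : Fintype.card F = q) : (U : Set (Fin 3 → K)).ncard = q ^ 3 := by
  have := Fintype.ofFinite U
  rw [← Nat.card_coe_set_eq]
  change Nat.card U = _
  rw [Nat.card_eq_fintype_card, Module.card_eq_pow_finrank (K := F), hU.finrank, hq]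

lemma card_span2 [Fintype F] [Finite K] {t v : Fin 3 → K} (h : LI2 t v)
    {q : ℕ} (hq : Fintype.card F = q) :
    ((Submodule.span F {t, v} : Submodule F (Fin 3 → K)) : Set (Fin 3 → K)).ncard = q ^ 2 := by
  have := Fintype.ofFinite (Submodule.span F {t, v})
  rw [← Nat.card_coe_set_eq]
  change Nat.card (Submodule.span F {t, v}) = _
  have hli : LinearIndependent F ![t, v] := by
    rw [LinearIndependent.pair_iff]
    intro x y e
    have := h (algebraMap F K x) (algebraMap F K y) (by simpa using e)
    simpa using this
  have hh := finrank_span_eq_card hli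
  have h5 : Set.range ![t, v] = {t, v} := by simp [Set.pair_comm]
  rw [h5] at hh
  rw [Nat.card_eq_fintype_card, Module.card_eq_pow_finrank (K := F), hh, hq]
  simp

lemma Frame.mem_Wset_iff {t s v : Fin 3 → K} {X Y} (f : Frame t s v X Y) (s0 : K)
    (B : Submodule F K) (S : Set (PGPoint K))
    (hS : ∀ z (hz : z ≠ 0), Projectivization.mk K z hz ∈ S ↔ InS X Y s0 B z) (w : Fin 3 → K) :
    w ∈ Wset X Y s0 B ↔ Y w ≠ 0 ∧
      (∀ x y : F, x • w 2 + y • v 2 = 0 → x = 0 ∧ y = 0) ∧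
      TangentSplashPaper.splash (pts (Submodule.span F {t, w, v})) = S := by
  unfold Wset
  rw [Set.mem_ofPred_eq, f.v2]
  apply and_congr_right
  intro hY
  apply and_congr_right
  intro hF
  obtain ⟨-, h⟩ := f.splash (F := F) (b := w) (c := v) ((f.li3_iff w).2 hY) (by rw [f.v2]; exact hF)
  simp only [f.v2, f.Xv, f.Yv, one_mul, mul_zero, sub_zero] at h
  rw [← f.inS_congr]
  constructor
  · intro hh
    ext P
    induction P using Projectivization.ind with
    | h z hz => rw [h, hS, hh z hz]
  · rintro rfl z hz
    rw [← h z hz, ← hS z hz]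

end helpers

/-- given a tangent splash `S` with centre `T` and an order-`q`-subline
`m` through `T` not contained in `ℓ∞`, the number of order-`q`-subplanes tangent to
`ℓ∞` containing `m` with tangent splash `S` is `q(q²−1)`. -/
theorem statement12 (q : ℕ) (F K : Type) [Field F] [Field K] [Fintype F] [Fintype K]
    [Algebra F K] (hF : Fintype.card F = q) (hK : Fintype.card K = q ^ 3)
    (S : Set (PGPoint K)) (T : PGPoint K) (hS : IsTangentSplash F S T)
    (m : Set (PGPoint K)) (hm : IsSubline F q m) (hTm : T ∈ m) (hmn : ¬ m ⊆ linf K) :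
    {π : Set (PGPoint K) | IsSubplane F π ∧ (∃ T' : PGPoint K, π ∩ linf K = {T'}) ∧
      m ⊆ π ∧ splash π = S}.ncard = q * (q ^ 2 - 1) := by
  have hq2 : 2 ≤ q := by rw [← hF]; exact Fintype.one_lt_card
  obtain ⟨π0, hπ0, htan, rfl⟩ := hS
  have hT : T ∈ π0 ∩ linf K := by rw [htan]; rfl
  obtain ⟨t, v, ht0, ht2, hv2, rfl, rfl⟩ := subline_form hm hTm hT.2 hmn
  obtain ⟨s, X, Y, f⟩ := exists_frame ht2 ht0 hv2
  have hli : LI2 t v := by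
    intro x y e
    have e1 := congrArg X e
    have e2 := congrFun e 2
    simp [f.Xt, f.Xv] at e1
    simp [f.t2, f.v2] at e2
    exact ⟨e1, e2⟩
  have hv0 : v ≠ 0 := by rintro rfl; simp at hv2
  have htv0 : t + v ≠ 0 := by
    intro h0
    have := congrFun h0 2
    simp [ht2, hv2] at this
  obtain ⟨s0, B, hB, hS⟩ : ∃ (s0 : K) (B : Submodule F K), Module.finrank F B = 2 ∧
      ∀ z (hz : z ≠ 0), Projectivization.mk K z hz ∈ splash π0 ↔ InS X Y s0 B z := by
    rw [isSubplane_iff] at hπ0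
    obtain ⟨U, hU, rfl⟩ := hπ0
    obtain ⟨a, ha, hat⟩ := (mk_mem_pts _ _ _).1 hT.1
    obtain ⟨U', hU', hpts, hmem⟩ := hU.scale ha
    rw [← hpts] at htan ⊢
    obtain ⟨b, c, rfl, hLI⟩ := hU'.extend1 ((hmem t).2 hat) ht0
    rw [tangent_iff hLI ht2 ht0] at htan
    obtain ⟨hd, h⟩ := f.splash hLI htan
    refine ⟨_, _, ?_, h⟩
    generalize c 2 * Y b - b 2 * Y c = d at *
    have hli : LinearIndependent F ![b 2 / d, c 2 / d] := by
      rw [LinearIndependent.pair_iff]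
      intro x y e
      apply htan
      simp only [Algebra.smul_def] at e ⊢
      field_simp at e
      linear_combination e
    have hh := finrank_span_eq_card hli
    have h5 : Set.range ![b 2 / d, c 2 / d] = {b 2 / d, c 2 / d} := by simp [Set.pair_comm]
    rw [h5] at hh
    simpa using hh
  have hW := f.mem_Wset_iff s0 B _ hS
  have himg : {π : Set (PGPoint K) | IsSubplane F π ∧ (∃ T' : PGPoint K, π ∩ linf K = {T'}) ∧
      pts (Submodule.span F {t, v}) ⊆ π ∧ splash π = splash π0} =
      (fun w => pts (Submodule.span F {t, w, v})) '' Wset X Y s0 B := by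
    ext π
    constructor
    · rintro ⟨h1, ⟨T', h2⟩, h3, h4⟩
      have htm : Projectivization.mk K t ht0 ∈ π := h3 hTm
      have hT' : Projectivization.mk K t ht0 = T' := by
        rw [← Set.mem_singleton_iff, ← h2]
        exact ⟨htm, hT.2⟩
      subst hT'
      rw [isSubplane_iff] at h1
      obtain ⟨U, hU, rfl⟩ := h1
      obtain ⟨a, ha, hat⟩ := (mk_mem_pts _ _ _).1 htm
      obtain ⟨U', hU', hpts, hmem⟩ := hU.scale ha
      rw [← hpts] at h2 h3 h4 ⊢
      have htU := (hmem t).2 hat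
      have hvU : v ∈ U' := by
        apply hU'.mem_of htU hli hv0 htv0
        · apply h3
          exact ⟨v, Submodule.subset_span (by simp), hv0, rfl⟩
        · apply h3
          exact ⟨t + v, Submodule.add_mem _ (Submodule.subset_span (by simp))
            (Submodule.subset_span (by simp)), htv0, rfl⟩
      obtain ⟨w, rfl, hLI⟩ := hU'.extend2 htU hvU hli
      have hLI' : LI3 t w v := by
        intro x y z e
        obtain ⟨e1, e2, e3⟩ := hLI x z y (by rw [← e]; abel)
        exact ⟨e1, e3, e2⟩
      rw [Set.pair_comm v w] at h2 h4 ⊢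
      refine ⟨w, ?_, rfl⟩
      rw [hW]
      exact ⟨(f.li3_iff w).1 hLI', (tangent_iff hLI' ht2 ht0).1 h2, h4⟩
    · rintro ⟨w, hw, rfl⟩
      rw [hW] at hw
      obtain ⟨hw0, hwF, hwS⟩ := hw
      have hLI := (f.li3_iff w).2 hw0
      refine ⟨?_, ⟨_, (tangent_iff hLI ht2 ht0).2 hwF⟩, ?_, hwS⟩
      · rw [isSubplane_iff]
        exact ⟨_, good_span hLI, rfl⟩
      · rintro P ⟨u, hu, hu0, rfl⟩
        refine ⟨u, ?_, hu0, rfl⟩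
        exact Submodule.span_mono (by intro x; simp; tauto) hu
  have hfib : ∀ w ∈ Wset X Y s0 B, {w' | w' ∈ Wset X Y s0 B ∧
      (fun w => pts (Submodule.span F {t, w, v})) w' =
      (fun w => pts (Submodule.span F {t, w, v})) w}.ncard = q ^ 3 - q ^ 2 := by
    intro w hw
    rw [hW] at hw
    obtain ⟨hw0, hwF, hwS⟩ := hw
    have hLI := (f.li3_iff w).2 hw0
    have hgood := good_span (F := F) hLI
    have hset : {w' | w' ∈ Wset X Y s0 B ∧
      (fun w => pts (Submodule.span F {t, w, v})) w' =
      (fun w => pts (Submodule.span F {t, w, v})) w} =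
        (Submodule.span F {t, w, v} : Set (Fin 3 → K)) \ (Submodule.span F {t, v}) := by
      ext w'
      constructor
      · rintro ⟨hw', e⟩
        simp only at e
        have hY' : Y w' ≠ 0 := hw'.1
        have hw0' : w' ≠ 0 := by rintro rfl; simp at hY'
        have htw0' : t + w' ≠ 0 := by
          intro h0
          have := congrArg Y h0
          simp [f.Yt, hY'] at this
        constructor
        · apply hgood.mem_of (t := t) (Submodule.subset_span (by simp)) ?_ hw0' htw0'
          · rw [← e]
            exact ⟨w', Submodule.subset_span (by simp), hw0', rfl⟩
          · rw [← e]
            exact ⟨t + w', Submodule.add_mem _ (Submodule.subset_span (by simp))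
              (Submodule.subset_span (by simp)), htw0', rfl⟩
          · intro x y e
            obtain ⟨e1, e2, e3⟩ := (f.li3_iff w').2 hY' x y 0 (by rw [← e]; simp)
            exact ⟨e1, e2⟩
        · intro hmem
          rw [SetLike.mem_coe, Submodule.mem_span_pair] at hmem
          obtain ⟨x, y, rfl⟩ := hmem
          apply hY'
          rw [algebraMap_smul' x, algebraMap_smul' y]
          simp only [map_add, map_smul, f.Yt, f.Yv, smul_zero, add_zero]
      · rintro ⟨h1, h2⟩
        rw [SetLike.mem_coe, Submodule.mem_span_triple] at h1
        obtain ⟨x, y, z, rfl⟩ := h1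
        have hy : y ≠ 0 := by
          rintro rfl
          apply h2
          rw [SetLike.mem_coe, Submodule.mem_span_pair]
          exact ⟨x, z, by simp⟩
        have hsp : Submodule.span F {t, x • t + y • w + z • v, v} = Submodule.span F {t, w, v} := by
          apply le_antisymm
          · rw [Submodule.span_le]
            rintro u (rfl | rfl | rfl)
            · exact Submodule.subset_span (by simp)
            · exact Submodule.mem_span_triple.2 ⟨x, y, z, rfl⟩
            · exact Submodule.subset_span (by simp)
          · rw [Submodule.span_le]
            rintro u (rfl | rfl | rfl)
            · exact Submodule.subset_span (by simp)
            · refine Submodule.mem_span_triple.2 ⟨-(x / y), y⁻¹, -(z / y), ?_⟩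
              simp only [smul_add, smul_smul, neg_smul, inv_mul_cancel₀ hy, one_smul]
              rw [show y⁻¹ * x = x / y by ring, show y⁻¹ * z = z / y by ring]
              abel
            · exact Submodule.subset_span (by simp)
        have hY' : Y (x • t + y • w + z • v) ≠ 0 := by
          rw [algebraMap_smul' x, algebraMap_smul' y, algebraMap_smul' z]
          simp [f.Yt, f.Yv, hy, hw0]
        refine ⟨?_, by simp only [hsp]⟩
        rw [hW, hsp]
        refine ⟨hY', ?_, hwS⟩
        have := (tangent_iff (F := F) hLI ht2 ht0).2 hwF
        rw [← hsp] at this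
        exact (tangent_iff ((f.li3_iff _).2 hY') ht2 ht0).1 this
    rw [hset, Set.ncard_sdiff, card_span3 hgood hF, card_span2 hli hF]
    exact Submodule.span_mono (by intro x; simp; tauto)
  have hcard := card_fib _ (Set.toFinite _) _ _ hfib
  rw [f.card_Wset s0 B hB hF, ← himg] at hcard
  have hpos : 0 < q ^ 3 - q ^ 2 := Nat.sub_pos_of_lt (Nat.pow_lt_pow_right hq2 (by norm_num))
  apply Nat.eq_of_mul_eq_mul_right hpos
  rw [← hcard]
  have e : (q ^ 2 - q) * q ^ 2 = q * (q ^ 3 - q ^ 2) := by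
    rw [Nat.sub_mul, Nat.mul_sub]
    congr 1 <;> ring
  rw [mul_assoc, e]
  ring

end TangentSplashPaper
end

section
/- Let q be a prime power, let T be a point of ℓ∞ in PG(2,q³), and let ℓ be an order-q-subline of ℓ∞ containing T. Then the number of tangent splashes of ℓ∞ with centre T that contain ℓ is exactly q+1. -/
namespace TangentSplashPaper

open Projectivization

section Aux

/-- Coordinatewise embedding of `F³` into `K³`. -/
def emb (K : Type*) {F : Type*} [Field F] [Field K] [Algebra F K] (y : Fin 3 → F) : Fin 3 → K :=
  fun i => algebraMap F K (y i)

variable {F K : Type} [Field F] [Field K] [Algebra F K]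

lemma emb_zero : emb K (0 : Fin 3 → F) = 0 := by
  funext i; simp [emb]

lemma emb_add (x y : Fin 3 → F) : emb K (x + y) = emb K x + emb K y := by
  funext i; simp [emb]

lemma emb_smul (a : F) (y : Fin 3 → F) : emb K (a • y) = algebraMap F K a • emb K y := by
  funext i; simp [emb]

lemma emb_inj {x y : Fin 3 → F} (h : emb K x = emb K y) : x = y := by
  funext i
  exact (algebraMap F K).injective (congrFun h i)

lemma emb_ne {y : Fin 3 → F} (hy : y ≠ 0) : emb K y ≠ 0 := by
  intro h
  exact hy (emb_inj (K := K) (h.trans emb_zero.symm))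

lemma emb_dot (c y : Fin 3 → F) : emb K c ⬝ᵥ emb K y = algebraMap F K (c ⬝ᵥ y) := by
  simp [emb, dotProduct]

lemma emb_prop {x y : Fin 3 → F} (hy : y ≠ 0) {m : K} (h : emb K x = m • emb K y) :
    ∃ a : F, algebraMap F K a = m ∧ x = a • y := by
  obtain ⟨i, hi⟩ := Function.ne_iff.mp hy
  have hi' : algebraMap F K (y i) ≠ 0 := by simpa using hi
  have h1 : algebraMap F K (x i / y i) = m := by
    have := congrFun h i
    simp only [emb, Pi.smul_apply, smul_eq_mul] at this
    rw [map_div₀, this]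
    field_simp
  refine ⟨_, h1, ?_⟩
  apply emb_inj (K := K)
  rw [emb_smul, h1, h]

lemma femb_ne (f : (Fin 3 → K) ≃ₗ[K] (Fin 3 → K)) {y : Fin 3 → F} (hy : y ≠ 0) :
    f (emb K y) ≠ 0 := by
  simpa using emb_ne (K := K) hy

lemma mem_subplane (f : (Fin 3 → K) ≃ₗ[K] (Fin 3 → K)) (P : PGPoint K) :
    P ∈ hmap f '' basePlane F K ↔
      ∃ y : Fin 3 → F, ∃ hy : y ≠ 0, P = Projectivization.mk K (f (emb K y)) (femb_ne f hy) := by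
  constructor
  · rintro ⟨Q, ⟨v, hv, rfl, h⟩, rfl⟩
    choose y hy using h
    have : v = emb K y := by funext i; exact (hy i).symm
    subst this
    have hy0 : y ≠ 0 := by
      rintro rfl; exact hv emb_zero
    exact ⟨y, hy0, by simp [hmap, Projectivization.map_mk]⟩
  · rintro ⟨y, hy, rfl⟩
    exact ⟨Projectivization.mk K (emb K y) (emb_ne hy), ⟨_, emb_ne hy, rfl, fun i => ⟨y i, rfl⟩⟩,
      by simp [hmap, Projectivization.map_mk]⟩

lemma mem_linf_mk (v : Fin 3 → K) (hv : v ≠ 0) :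
    Projectivization.mk K v hv ∈ linf K ↔ v 2 = 0 := by
  obtain ⟨a, ha⟩ := Projectivization.exists_smul_eq_mk_rep K v hv
  change (Projectivization.mk K v hv).rep 2 = 0 ↔ _
  rw [← ha]
  simp [Units.smul_def]

lemma mk_sub_le (v : Fin 3 → K) (hv : v ≠ 0) (W : Submodule K (Fin 3 → K)) :
    (Projectivization.mk K v hv).submodule ≤ W ↔ v ∈ W := by
  rw [Projectivization.submodule_mk, Submodule.span_singleton_le_iff_mem]

/-- A basis `t, u` of the vector plane underlying the line at infinity. -/
structure Frame_s14 (t u : Fin 3 → K) : Prop where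
  t2 : t 2 = 0
  u2 : u 2 = 0
  li : ∀ a b : K, a • t + b • u = 0 → a = 0 ∧ b = 0
  sp : ∀ v : Fin 3 → K, v 2 = 0 → ∃ a b : K, v = a • t + b • u

lemma Frame_s14.t_ne {t u : Fin 3 → K} (h : Frame_s14 t u) : t ≠ 0 := by
  intro h0
  have := h.li 1 0 (by simp [h0])
  simp at this

lemma Frame_s14.p_ne {t u : Fin 3 → K} (h : Frame_s14 t u) (x : K) : x • t + u ≠ 0 := by
  intro h0
  have := h.li x 1 (by simpa using h0)
  simp at this

lemma exists_frame_s14 (t : Fin 3 → K) (ht : t ≠ 0) (h2 : t 2 = 0) : ∃ u, Frame_s14 t u := by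
  by_cases h0 : t 0 = 0
  · have h1 : t 1 ≠ 0 := by
      intro h1; apply ht; funext i; fin_cases i <;> simp [h0, h1, h2]
    refine ⟨![1, 0, 0], h2, by simp, ?_, ?_⟩
    · intro a b h
      have e0 := congrFun h 0
      have e1 := congrFun h 1
      simp [h0, h1] at e0 e1
      exact ⟨e1, e0⟩
    · intro v hv
      refine ⟨v 1 / t 1, v 0, ?_⟩
      funext i; fin_cases i <;> simp [h0, h1, h2, hv]
  · refine ⟨![0, 1, 0], h2, by simp, ?_, ?_⟩
    · intro a b h
      have e0 := congrFun h 0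
      have e1 := congrFun h 1
      simp [h0] at e0 e1
      subst e0
      simpa using e1
    · intro v hv
      refine ⟨v 0 / t 0, v 1 - v 0 / t 0 * t 1, ?_⟩
      funext i; fin_cases i <;> simp [h0, h2, hv]

/-- The affine points of the line at infinity with respect to a frame. -/
def pt {t u : Fin 3 → K} (h : Frame_s14 t u) (x : K) : PGPoint K :=
  Projectivization.mk K (x • t + u) (h.p_ne x)

/-- The point of the frame. -/
def ctr {t u : Fin 3 → K} (h : Frame_s14 t u) : PGPoint K :=
  Projectivization.mk K t h.t_ne

lemma pt_inj {t u : Fin 3 → K} (h : Frame_s14 t u) : Function.Injective (pt h) := by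
  intro x y hxy
  obtain ⟨a, ha⟩ := (Projectivization.mk_eq_mk_iff' K _ _ _ _).mp hxy
  have := h.li (a * y - x) (a - 1) (by rw [← sub_eq_zero] at ha; rw [← ha]; module)
  obtain ⟨h1, h2⟩ := this
  have : a = 1 := sub_eq_zero.mp h2
  subst this
  simpa using (sub_eq_zero.mp h1).symm

lemma pt_ne {t u : Fin 3 → K} (h : Frame_s14 t u) (x : K) : pt h x ≠ ctr h := by
  intro hx
  obtain ⟨a, ha⟩ := (Projectivization.mk_eq_mk_iff' K _ _ _ _).mp hx
  have := h.li (a - x) (-1) (by rw [← sub_eq_zero] at ha; rw [← ha]; module)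
  simp at this

lemma mem_linf_cases {t u : Fin 3 → K} (h : Frame_s14 t u) {P : PGPoint K} (hP : P ∈ linf K) :
    P = ctr h ∨ ∃ x, P = pt h x := by
  induction P using Projectivization.ind with
  | h v hv =>
    rw [mem_linf_mk] at hP
    obtain ⟨a, b, rfl⟩ := h.sp v hP
    by_cases hb : b = 0
    · left
      subst hb
      exact (Projectivization.mk_eq_mk_iff' K _ _ _ _).mpr ⟨a, by simp⟩
    · right
      refine ⟨a / b, (Projectivization.mk_eq_mk_iff' K _ _ _ _).mpr ⟨b, ?_⟩⟩
      rw [smul_add, smul_smul, mul_div_cancel₀ _ hb]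

lemma pt_mem {t u : Fin 3 → K} (h : Frame_s14 t u) (x : K) : pt h x ∈ linf K := by
  rw [pt, mem_linf_mk]; simp [h.t2, h.u2]

lemma ctr_mem {t u : Fin 3 → K} (h : Frame_s14 t u) : ctr h ∈ linf K := by
  rw [ctr, mem_linf_mk]; exact h.t2

/-- two points determine a line -/
lemma mem_pair {V : Type*} [AddCommGroup V] [Module K V] (W : Submodule K V)
    (hW : Module.finrank K W = 2) {p r x : V}
    (hpr : LinearIndependent K ![p, r]) (hp : p ∈ W) (hr : r ∈ W) (hx : x ∈ W) :
    ∃ a b : K, x = a • p + b • r := by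
  have hfin : FiniteDimensional K W := Module.finite_of_finrank_pos (by omega)
  have h1 : Submodule.span K (Set.range ![p, r]) = W := by
    apply Submodule.eq_of_le_of_finrank_le
    · rw [Submodule.span_le]
      rintro _ ⟨i, rfl⟩
      fin_cases i <;> simpa
    · rw [finrank_span_eq_card hpr, hW]; simp
  rw [← h1] at hx
  simp only [Matrix.range_cons, Matrix.range_empty, Set.union_empty, Set.singleton_union] at hx
  obtain ⟨a, b, h⟩ := Submodule.mem_span_pair.mp hx
  exact ⟨a, b, h.symm⟩

/-- two `F`-independent vectors orthogonal to a given vector -/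
lemma exists_pair (c : Fin 3 → F) : ∃ a b : Fin 3 → F, LinearIndependent F ![a, b] ∧
    c ⬝ᵥ a = 0 ∧ c ⬝ᵥ b = 0 := by
  let φ : (Fin 3 → F) →ₗ[F] F := dotProductBilin F F c
  have h1 := LinearMap.finrank_range_add_finrank_ker φ
  have h2 : Module.finrank F φ.range ≤ 1 := by
    simpa using Submodule.finrank_le φ.range
  have h3 : 1 < Module.finrank F φ.ker := by
    simp at h1; omega
  obtain ⟨x, hx⟩ := (Module.finrank_pos_iff_exists_ne_zero (R := F) (M := φ.ker)).mp (by omega)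
  obtain ⟨y, hy⟩ := exists_linearIndependent_pair_of_one_lt_finrank h3 hx
  refine ⟨x, y, ?_, x.2, y.2⟩
  rw [LinearIndependent.pair_iff] at hy ⊢
  intro s t h
  exact hy s t (Subtype.ext (by simpa using h))

lemma dual_inj {t u : Fin 3 → K} (h : Frame_s14 t u) (f : (Fin 3 → K) ≃ₗ[K] (Fin 3 → K))
    {y0 : Fin 3 → F} (hy0 : y0 ≠ 0) {z0 : Fin 3 → K} {k : K} (hk : k ≠ 0)
    (hf0 : f (emb K y0) = k • t) (hz : f z0 = u)
    (tan : ∀ y : Fin 3 → F, f (emb K y) 2 = 0 → ∃ m : K, emb K y = m • emb K y0)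
    {c : Fin 3 → F} (h1 : c ⬝ᵥ y0 = 0) (h2 : emb K c ⬝ᵥ z0 = 0) : c = 0 := by
  by_contra hc
  have hy : emb K c ⬝ᵥ emb K y0 = 0 := by rw [emb_dot, h1, map_zero]
  -- the form vanishes on the preimage of the plane at infinity
  have hH : ∀ z : Fin 3 → K, f z 2 = 0 → emb K c ⬝ᵥ z = 0 := by
    intro z hz2
    obtain ⟨a, b, hab⟩ := h.sp _ hz2
    have : z = (a / k) • emb K y0 + b • z0 := by
      apply f.injective
      rw [hab, map_add, map_smul, map_smul, hf0, hz, smul_smul, div_mul_cancel₀ _ hk]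
    rw [this, dotProduct_add, dotProduct_smul, dotProduct_smul, hy, h2]
    simp
  have hK : ∀ z : Fin 3 → K, emb K c ⬝ᵥ z = 0 → f z 2 = 0 := by
    intro z hcz
    by_contra hz2
    apply hc
    apply emb_inj (K := K)
    rw [emb_zero]
    apply dotProduct_eq_zero
    intro v
    have := hH (v - (f v 2 / f z 2) • z) (by simp [hz2])
    rw [dotProduct_sub, dotProduct_smul, hcz] at this
    simpa using this
  obtain ⟨a, b, hab, ha, hb⟩ := exists_pair c
  obtain ⟨m, hm⟩ := tan a (hK _ (by rw [emb_dot, ha, map_zero]))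
  obtain ⟨n, hn⟩ := tan b (hK _ (by rw [emb_dot, hb, map_zero]))
  obtain ⟨m', -, rfl⟩ := emb_prop hy0 hm
  obtain ⟨n', -, rfl⟩ := emb_prop hy0 hn
  rw [LinearIndependent.pair_iff] at hab
  obtain ⟨e1, e2⟩ := hab n' (-m') (by module)
  have e3 : m' = 0 := by simpa using e2
  have := hab 1 0 (by simp [e3])
  simp at this

lemma li_emb {a b : Fin 3 → F} (h : LinearIndependent F ![a, b]) :
    LinearIndependent K ![emb K a, emb K b] := by
  rw [LinearIndependent.pair_iff'] 
  · intro m hm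
    have ha : a ≠ 0 := h.ne_zero 0
    obtain ⟨a', -, rfl⟩ := emb_prop ha hm.symm
    rw [LinearIndependent.pair_iff' ha] at h
    exact h a' rfl
  · exact emb_ne (h.ne_zero 0)

lemma li_map (f : (Fin 3 → K) ≃ₗ[K] (Fin 3 → K)) {a b : Fin 3 → K}
    (h : LinearIndependent K ![a, b]) : LinearIndependent K ![f a, f b] := by
  rw [LinearIndependent.pair_iff] at h ⊢
  intro s t hst
  apply h
  apply f.injective
  simpa using hst

lemma mk_ne_of_li {a b : Fin 3 → K} (h : LinearIndependent K ![a, b]) (ha : a ≠ 0) (hb : b ≠ 0) :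
    Projectivization.mk K a ha ≠ Projectivization.mk K b hb := by
  intro he
  obtain ⟨m, hm⟩ := (Projectivization.mk_eq_mk_iff' K _ _ _ _).mp he
  rw [LinearIndependent.pair_iff] at h
  have := h 1 (-m) (by rw [← hm]; module)
  simp at this

lemma mem_splash_of {f : (Fin 3 → K) ≃ₗ[K] (Fin 3 → K)} {a b : Fin 3 → F}
    (hab : LinearIndependent F ![a, b]) {x : Fin 3 → K} (hx : x ≠ 0) (hx2 : x 2 = 0) {l m : K}
    (hlm : x = l • f (emb K a) + m • f (emb K b)) :
    Projectivization.mk K x hx ∈ splash (hmap f '' basePlane F K) := by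
  have hli := li_map f (li_emb (K := K) hab)
  refine ⟨(mem_linf_mk _ _).mpr hx2, _, _, (mem_subplane f _).mpr ⟨a, hab.ne_zero 0, rfl⟩,
    (mem_subplane f _).mpr ⟨b, hab.ne_zero 1, rfl⟩, mk_ne_of_li hli _ _, _,
    ⟨Submodule.span K (Set.range ![f (emb K a), f (emb K b)]), ?_, rfl⟩, ?_, ?_, ?_⟩
  · rw [finrank_span_eq_card hli]; simp
  · exact (mk_sub_le _ _ _).mpr (Submodule.subset_span ⟨0, rfl⟩)
  · exact (mk_sub_le _ _ _).mpr (Submodule.subset_span ⟨1, rfl⟩)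
  · refine (mk_sub_le _ _ _).mpr ?_
    rw [hlm]
    exact Submodule.add_mem _ (Submodule.smul_mem _ _ (Submodule.subset_span ⟨0, rfl⟩))
      (Submodule.smul_mem _ _ (Submodule.subset_span ⟨1, rfl⟩))

lemma dot_emb_cross_left (a b : Fin 3 → F) : (crossProduct a b) ⬝ᵥ a = 0 := by
  rw [dotProduct_comm, dot_self_cross]

lemma dot_emb_cross_right (a b : Fin 3 → F) : (crossProduct a b) ⬝ᵥ b = 0 := by
  rw [dotProduct_comm, dot_cross_self]

lemma splash_eq {t u : Fin 3 → K} (h : Frame_s14 t u) (f : (Fin 3 → K) ≃ₗ[K] (Fin 3 → K))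
    {y0 : Fin 3 → F} (hy0 : y0 ≠ 0) {z0 : Fin 3 → K} {k : K} (hk : k ≠ 0)
    (hf0 : f (emb K y0) = k • t) (hz : f z0 = u)
    (tan : ∀ y : Fin 3 → F, f (emb K y) 2 = 0 → ∃ m : K, emb K y = m • emb K y0) :
    splash (hmap f '' basePlane F K) = insert (ctr h)
      (pt h '' {x | ∃ c : Fin 3 → F, c ⬝ᵥ y0 = 1 ∧ x = -k * (emb K c ⬝ᵥ z0)}) := by
  apply Set.Subset.antisymm
  · rintro X ⟨hXl, P, Q, hP, hQ, hPQ, _, ⟨W, hW, rfl⟩, hPW, hQW, hXW⟩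
    rcases mem_linf_cases h hXl with rfl | ⟨x, rfl⟩
    · exact Set.mem_insert _ _
    right
    refine ⟨x, ?_, rfl⟩
    obtain ⟨a, ha, rfl⟩ := (mem_subplane f P).mp hP
    obtain ⟨b, hb, rfl⟩ := (mem_subplane f Q).mp hQ
    have hab : LinearIndependent F ![a, b] := by
      rw [LinearIndependent.pair_iff' ha]
      rintro m rfl
      apply hPQ
      symm
      rw [Projectivization.mk_eq_mk_iff']
      exact ⟨algebraMap F K m, by rw [emb_smul, map_smul]⟩
    obtain ⟨l, m, hlm⟩ := mem_pair W hW (li_map f (li_emb hab)) ((mk_sub_le _ _ _).mp hPW)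
      ((mk_sub_le _ _ _).mp hQW) ((mk_sub_le _ _ _).mp hXW)
    have hpre : (x / k) • emb K y0 + z0 = l • emb K a + m • emb K b := by
      apply f.injective
      rw [map_add, map_add, map_smul, map_smul, map_smul, hf0, hz, ← hlm, smul_smul,
        div_mul_cancel₀ _ hk]
    set c := crossProduct a b with hc
    have hc0 : c ≠ 0 := crossProduct_ne_zero_iff_linearIndependent.mpr hab
    have hd := congrArg (fun v => emb K c ⬝ᵥ v) hpre
    simp only [dotProduct_add, dotProduct_smul, emb_dot] at hd
    rw [hc, dot_emb_cross_left, dot_emb_cross_right, ← hc] at hd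
    simp only [map_zero, smul_eq_mul] at hd
    have hcy : c ⬝ᵥ y0 ≠ 0 := by
      intro h0
      apply hc0
      refine dual_inj h f hy0 hk hf0 hz tan h0 ?_
      simpa [h0] using hd
    refine ⟨(c ⬝ᵥ y0)⁻¹ • c, by simp [hcy], ?_⟩
    have hcy' : algebraMap F K (c ⬝ᵥ y0) ≠ 0 := by simpa using hcy
    rw [emb_smul, smul_dotProduct, map_inv₀, smul_eq_mul]
    field_simp at hd ⊢
    linear_combination hd
  · rintro X (rfl | ⟨x, ⟨c, hc1, rfl⟩, rfl⟩)
    · obtain ⟨b, hb⟩ := exists_linearIndependent_pair_of_one_lt_finrank (R := F)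
        (M := Fin 3 → F) (by simp) hy0
      refine mem_splash_of (f := f) hb h.t_ne h.t2 (l := k⁻¹) (m := 0) ?_
      rw [hf0, smul_smul, inv_mul_cancel₀ hk]; simp
    · obtain ⟨a, b, hab, ha, hb⟩ := exists_pair c
      set x := -k * (emb K c ⬝ᵥ z0) with hx
      -- the vector orthogonal to c is a combination of a and b
      have hker : Module.finrank K (LinearMap.ker (dotProductBilin K K (emb K c))) = 2 := by
        have h1 := LinearMap.finrank_range_add_finrank_ker (dotProductBilin K K (emb K c))
        have h2 : Module.finrank K (LinearMap.range (dotProductBilin K K (emb K c))) = 1 := by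
          have : LinearMap.range (dotProductBilin K K (emb K c)) = ⊤ := by
            apply LinearMap.range_eq_top.mpr
            intro r
            refine ⟨r • emb K y0, ?_⟩
            change emb K c ⬝ᵥ (r • emb K y0) = r
            rw [dotProduct_smul, emb_dot, hc1]; simp
          rw [this]; simp
        simp at h1; omega
      obtain ⟨l, m, hlm⟩ := mem_pair (x := (x / k) • emb K y0 + z0) _ hker
        (li_emb (K := K) hab)
        (by change emb K c ⬝ᵥ _ = 0; rw [emb_dot, ha, map_zero])
        (by change emb K c ⬝ᵥ _ = 0; rw [emb_dot, hb, map_zero])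
        (by
          change emb K c ⬝ᵥ _ = 0
          rw [dotProduct_add, dotProduct_smul, emb_dot, hc1, hx]
          simp only [map_one, smul_eq_mul]
          field_simp
          ring)
      refine mem_splash_of (f := f) hab (h.p_ne x) (by simp [h.t2, h.u2]) (l := l) (m := m) ?_
      rw [← map_smul, ← map_smul, ← map_add, ← hlm, map_add, map_smul, hf0, hz, smul_smul,
        div_mul_cancel₀ _ hk]

/-- The model of a tangent splash. -/
def model {t u : Fin 3 → K} (h : Frame_s14 t u) (c : K) (W : Submodule F K) : Set (PGPoint K) :=
  insert (ctr h) (pt h '' {x | x - c ∈ W})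

lemma model_le {t u : Fin 3 → K} (h : Frame_s14 t u) {A B : Set K} :
    insert (ctr h) (pt h '' A) ⊆ insert (ctr h) (pt h '' B) ↔ A ⊆ B := by
  constructor
  · intro hs x hx
    rcases hs (Or.inr ⟨x, hx, rfl⟩) with h1 | ⟨y, hy, h1⟩
    · exact absurd h1 (pt_ne h x)
    · rwa [← pt_inj h h1]
  · intro hs
    exact Set.insert_subset_insert (Set.image_mono hs)

lemma model_of_splash {t u : Fin 3 → K} (h : Frame_s14 t u) {S : Set (PGPoint K)}
    (hS : IsTangentSplash F S (ctr h)) :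
    ∃ W : Submodule F K, Module.finrank F W = 2 ∧ ∃ c : K, S = model h c W := by
  obtain ⟨_, ⟨f, rfl⟩, hT, rfl⟩ := hS
  have hT1 : ctr h ∈ hmap f '' basePlane F K := (hT.symm ▸ Set.mem_singleton _ :
    ctr h ∈ (hmap f '' basePlane F K) ∩ linf K).1
  obtain ⟨y0, hy0, hy0T⟩ := (mem_subplane f _).mp hT1
  obtain ⟨k, hk⟩ := (Projectivization.mk_eq_mk_iff' K _ _ _ _).mp hy0T.symm
  have hk0 : k ≠ 0 := by
    rintro rfl
    rw [zero_smul] at hk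
    exact femb_ne f hy0 hk.symm
  have tan : ∀ y : Fin 3 → F, f (emb K y) 2 = 0 → ∃ m : K, emb K y = m • emb K y0 := by
    intro y hy2
    by_cases hy : y = 0
    · exact ⟨0, by rw [hy, emb_zero, zero_smul]⟩
    · have hm : Projectivization.mk K (f (emb K y)) (femb_ne f hy) ∈
          (hmap f '' basePlane F K) ∩ linf K :=
        ⟨(mem_subplane f _).mpr ⟨y, hy, rfl⟩, (mem_linf_mk _ _).mpr hy2⟩
      rw [hT, Set.mem_singleton_iff, hy0T, Projectivization.mk_eq_mk_iff'] at hm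
      obtain ⟨m, hm⟩ := hm
      refine ⟨m, f.injective ?_⟩
      rw [map_smul, hm]
  have hz : f (f.symm u) = u := f.apply_symm_apply u
  rw [splash_eq h f hy0 hk0 hk.symm hz tan]
  set z0 := f.symm u with hz0
  let φ : (Fin 3 → F) →ₗ[F] F := dotProductBilin F F y0
  let ψ : (Fin 3 → F) →ₗ[F] K :=
    { toFun := fun c => -k * (emb K c ⬝ᵥ z0)
      map_add' := by intro a b; rw [emb_add, add_dotProduct]; ring
      map_smul' := by
        intro a b
        rw [emb_smul, smul_dotProduct, smul_eq_mul, RingHom.id_apply, Algebra.smul_def]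
        ring }
  have hφ : ∀ c, φ c = c ⬝ᵥ y0 := fun c => dotProduct_comm y0 c
  obtain ⟨i, hi⟩ := Function.ne_iff.mp hy0
  have hi' : y0 i ≠ 0 := by simpa using hi
  let c0 : Fin 3 → F := Pi.single i (y0 i)⁻¹
  have hc0 : c0 ⬝ᵥ y0 = 1 := by simp [c0, hi']
  refine ⟨(LinearMap.ker φ).map ψ, ?_, ψ c0, ?_⟩
  · have h1 := LinearMap.finrank_range_add_finrank_ker φ
    have h2 : LinearMap.range φ = ⊤ := by
      apply LinearMap.range_eq_top.mpr
      intro r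
      exact ⟨r • c0, by rw [hφ, smul_dotProduct, hc0]; simp⟩
    rw [h2] at h1
    simp only [finrank_top, Module.finrank_self, Module.finrank_fin_fun] at h1
    have h3 : Function.Injective (ψ.domRestrict (LinearMap.ker φ)) := by
      rw [← LinearMap.ker_eq_bot, LinearMap.ker_eq_bot']
      rintro ⟨c, hc⟩ hcz
      have hc' : c ⬝ᵥ y0 = 0 := by rw [← hφ]; exact hc
      have hcz' : -k * (emb K c ⬝ᵥ z0) = 0 := hcz
      have := dual_inj h f hy0 hk0 hk.symm hz tan hc' (by simpa [hk0] using hcz')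
      exact Subtype.ext this
    have h4 := LinearMap.finrank_range_of_inj h3
    rw [LinearMap.range_domRestrict] at h4
    omega
  · unfold model
    congr 2
    ext x
    constructor
    · rintro ⟨c, hc, rfl⟩
      refine ⟨c - c0, ?_, ?_⟩
      · change φ _ = 0
        rw [hφ, sub_dotProduct, hc, hc0, sub_self]
      · rw [map_sub]; rfl
    · rintro ⟨c, hc, hcx⟩
      refine ⟨c + c0, ?_, ?_⟩
      · have : φ c = 0 := hc
        rw [hφ] at this
        rw [add_dotProduct, this, hc0, zero_add]
      · change x = ψ (c + c0)
        rw [map_add, hcx, sub_add_cancel]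

lemma splash_of_model {t u : Fin 3 → K} (h : Frame_s14 t u) (W : Submodule F K)
    (hW : Module.finrank F W = 2) (c : K) : IsTangentSplash F (model h c W) (ctr h) := by
  have hfin : FiniteDimensional F W := Module.finite_of_finrank_pos (by omega)
  obtain ⟨w1, hw1⟩ := (Module.finrank_pos_iff_exists_ne_zero (R := F) (M := W)).mp (by omega)
  obtain ⟨w2, hw⟩ := exists_linearIndependent_pair_of_one_lt_finrank (R := F) (M := W)
    (by omega) hw1
  obtain ⟨w1, hw1W⟩ := w1
  obtain ⟨w2, hw2W⟩ := w2
  have hw1' : w1 ≠ 0 := fun h0 => hw1 (Subtype.ext h0)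
  have hli : LinearIndependent F ![w1, w2] := by
    rw [LinearIndependent.pair_iff] at hw ⊢
    intro s r hsr
    exact hw s r (Subtype.ext (by simpa using hsr))
  have hspan : ∀ x ∈ W, ∃ a b : F, x = a • w1 + b • w2 := fun x hx =>
    mem_pair W hW hli hw1W hw2W hx
  let p : Fin 3 → K := ![0, 0, 1]
  let e1 : Fin 3 → K := (-w1⁻¹) • (u + c • t + w2 • p)
  let g : (Fin 3 → K) →ₗ[K] (Fin 3 → K) :=
    (LinearMap.proj 0).smulRight t + (LinearMap.proj 1).smulRight e1 +
      (LinearMap.proj 2).smulRight p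
  have hg : ∀ y, g y = y 0 • t + y 1 • e1 + y 2 • p := fun y => rfl
  have hg2 : ∀ y, g y 2 = y 2 - y 1 * w2 / w1 := by
    intro y
    rw [hg]
    have hp2 : p 2 = 1 := rfl
    simp only [e1, Pi.add_apply, Pi.smul_apply, smul_eq_mul, h.t2, h.u2, hp2]
    ring
  have hginj : Function.Injective g := by
    rw [← LinearMap.ker_eq_bot, LinearMap.ker_eq_bot']
    intro y hy
    have h2 := hg2 y
    rw [hy] at h2
    have h2' : y 2 = y 1 * w2 / w1 := by
      have : (0 : Fin 3 → K) 2 = 0 := rfl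
      rw [this] at h2
      linear_combination -h2
    have h3 := h.li (y 0 - y 1 * w1⁻¹ * c) (-(y 1 * w1⁻¹)) (by
      rw [← hy, hg, h2']
      simp only [e1]
      module)
    have hy1 : y 1 = 0 := by simpa [hw1'] using h3.2
    have hy0 : y 0 = 0 := by simpa [hy1] using h3.1
    have hy2 : y 2 = 0 := by simpa [hy1] using h2'
    funext i
    fin_cases i <;> simp [hy0, hy1, hy2]
  let f := LinearEquiv.ofInjectiveEndo g hginj
  have hfg : ∀ y, f y = g y := fun y => rfl
  let y0 : Fin 3 → F := ![1, 0, 0]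
  have hy0 : y0 ≠ 0 := by
    intro h0
    have := congrFun h0 0
    simp [y0] at this
  let z0 : Fin 3 → K := ![-c, -w1, -w2]
  have hf0 : f (emb K y0) = (1 : K) • t := by
    rw [hfg, hg]; simp [emb, y0]
  have hz : f z0 = u := by
    rw [hfg, hg]
    simp only [z0, e1, Matrix.cons_val_zero, Matrix.cons_val_one, Matrix.cons_val]
    rw [smul_smul, neg_mul_neg, mul_inv_cancel₀ hw1']
    module
  have tan : ∀ y : Fin 3 → F, f (emb K y) 2 = 0 → ∃ m : K, emb K y = m • emb K y0 := by
    intro y hy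
    rw [hfg, hg2] at hy
    simp only [emb] at hy
    have h1 : (y 2) • w1 + (-(y 1)) • w2 = 0 := by
      rw [Algebra.smul_def, Algebra.smul_def, map_neg]
      field_simp at hy
      linear_combination hy
    obtain ⟨h2, h3⟩ := (LinearIndependent.pair_iff.mp hli) _ _ h1
    rw [neg_eq_zero] at h3
    refine ⟨algebraMap F K (y 0), ?_⟩
    funext i
    fin_cases i <;> simp [emb, y0, h2, h3]
  refine ⟨hmap f '' basePlane F K, ⟨f, rfl⟩, ?_, ?_⟩
  · apply Set.Subset.antisymm
    · rintro X ⟨hX, hXl⟩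
      obtain ⟨y, hy, rfl⟩ := (mem_subplane f X).mp hX
      rw [mem_linf_mk] at hXl
      obtain ⟨m, hm⟩ := tan y hXl
      rw [Set.mem_singleton_iff, ctr, Projectivization.mk_eq_mk_iff']
      exact ⟨m, by rw [hm, map_smul, hf0, one_smul]⟩
    · rintro X rfl
      refine ⟨(mem_subplane f _).mpr ⟨y0, hy0, ?_⟩, ctr_mem h⟩
      rw [ctr, Projectivization.mk_eq_mk_iff']
      exact ⟨1, by rw [hf0, one_smul, one_smul]⟩
  · rw [splash_eq h f hy0 one_ne_zero hf0 hz tan]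
    unfold model
    congr 2
    ext x
    constructor
    · intro hx
      obtain ⟨a, b, hab⟩ := hspan _ hx
      refine ⟨![1, a, b], by simp [y0, dotProduct, Fin.sum_univ_three], ?_⟩
      rw [Algebra.smul_def, Algebra.smul_def] at hab
      simp [emb, z0, dotProduct, Fin.sum_univ_three]
      linear_combination hab
    · rintro ⟨d, hd, rfl⟩
      have hd0 : d 0 = 1 := by simpa [y0, dotProduct, Fin.sum_univ_three] using hd
      have : -1 * (emb K d ⬝ᵥ z0) - c = d 1 • w1 + d 2 • w2 := by
        rw [Algebra.smul_def, Algebra.smul_def]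
        simp [emb, z0, dotProduct, Fin.sum_univ_three, hd0]
        ring
      change -1 * (emb K d ⬝ᵥ z0) - c ∈ W
      rw [this]
      exact W.add_mem (W.smul_mem _ hw1W) (W.smul_mem _ hw2W)

lemma subline_form_s14 [Fintype F] {t u : Fin 3 → K} (h : Frame_s14 t u) {b : Set (PGPoint K)}
    (hb : IsSubline F (Fintype.card F) b) (hbl : b ⊆ linf K) (hT : ctr h ∈ b) :
    ∃ c d : K, d ≠ 0 ∧ b = model h c (Submodule.span F {d}) := by
  obtain ⟨_, _, ⟨f, rfl⟩, ⟨W, hW, rfl⟩, hcard, rfl⟩ := hb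
  obtain ⟨y0, hy0, hy0T⟩ := (mem_subplane f _).mp hT.1
  obtain ⟨k, hk⟩ := (Projectivization.mk_eq_mk_iff' K _ _ _ _).mp hy0T.symm
  have hk0 : k ≠ 0 := by
    rintro rfl
    rw [zero_smul] at hk
    exact femb_ne f hy0 hk.symm
  have hF : 0 < Fintype.card F := Fintype.card_pos
  obtain ⟨Q, hQ, hQT⟩ := Set.exists_ne_of_one_lt_ncard
    (lt_of_lt_of_eq (by omega) hcard.symm) (ctr h)
  obtain ⟨x, rfl⟩ : ∃ x, Q = pt h x := by
    rcases mem_linf_cases h (hbl hQ) with h1 | h1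
    · exact absurd h1 hQT
    · exact h1
  obtain ⟨y1, hy1, hy1T⟩ := (mem_subplane f _).mp hQ.1
  obtain ⟨m, hm⟩ := (Projectivization.mk_eq_mk_iff' K _ _ _ _).mp hy1T.symm
  have hm0 : m ≠ 0 := by
    rintro rfl
    rw [zero_smul] at hm
    exact femb_ne f hy1 hm.symm
  have hd : k / m ≠ 0 := div_ne_zero hk0 hm0
  refine ⟨x, k / m, hd, ?_⟩
  symm
  have htW : t ∈ W := (mk_sub_le _ _ _).mp hT.2
  have hxW : x • t + u ∈ W := (mk_sub_le _ _ _).mp hQ.2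
  have hset : {y : K | y - x ∈ Submodule.span F {k / m}} =
      Set.range (fun a : F => x + a • (k / m)) := by
    ext y
    change y - x ∈ Submodule.span F {k / m} ↔ _
    rw [Submodule.mem_span_singleton]
    constructor
    · rintro ⟨a, ha⟩; exact ⟨a, by simp [ha]⟩
    · rintro ⟨a, rfl⟩; exact ⟨a, by simp⟩
  have hinj : Function.Injective (fun a : F => x + a • (k / m)) := by
    intro a b hab
    simpa [hk0, hm0, Algebra.smul_def] using hab
  apply Set.eq_of_subset_of_ncard_le
  · rintro X (rfl | ⟨z, hz, rfl⟩)
    · exact hT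
    · rw [hset] at hz
      obtain ⟨a, rfl⟩ := hz
      have hvec : f (emb K (a • y0 + y1)) = m • ((x + a • (k / m)) • t + u) := by
        rw [emb_add, emb_smul, map_add, map_smul, ← hk, ← hm, Algebra.smul_def a (k / m)]
        have : m * (x + algebraMap F K a * (k / m)) = algebraMap F K a * k + m * x := by
          field_simp
          ring
        rw [smul_add m ((x + algebraMap F K a * (k / m)) • t),
          smul_smul m (x + algebraMap F K a * (k / m)) t, this]
        module
      constructor
      · have hne : a • y0 + y1 ≠ 0 := by
          intro h0
          rw [h0, emb_zero, map_zero] at hvec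
          exact smul_ne_zero hm0 (h.p_ne _) hvec.symm
        refine (mem_subplane f _).mpr ⟨_, hne, ?_⟩
        symm
        exact (Projectivization.mk_eq_mk_iff' K _ _ _ _).mpr ⟨m, hvec.symm⟩
      · refine (mk_sub_le _ _ _).mpr ?_
        have : (x + a • (k / m)) • t + u = (a • (k / m)) • t + (x • t + u) := by
          rw [add_smul]; abel
        rw [this]
        exact W.add_mem (W.smul_mem _ htW) hxW
  · have hfi : (pt h '' {y : K | y - x ∈ Submodule.span F {k / m}}).Finite := by
      rw [hset]; exact (Set.finite_range _).image _
    rw [hcard, model, Set.ncard_insert_of_notMem _ hfi, Set.ncard_image_of_injective _ (pt_inj h), hset,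
      Set.ncard_range_of_injective hinj, Nat.card_eq_fintype_card]
    · rintro ⟨z, -, hz⟩
      exact pt_ne h z hz
  · exact Set.finite_of_ncard_pos (by omega)

end Aux

/-- for a point `T` of `ℓ∞` and an order-`q`-subline `ℓ` of `ℓ∞`
through `T`, there are exactly `q+1` tangent splashes of `ℓ∞` with centre `T`
containing `ℓ`. -/
theorem statement14 (q : ℕ) (F K : Type) [Field F] [Field K] [Fintype F] [Fintype K]
    [Algebra F K] (hF : Fintype.card F = q) (hK : Fintype.card K = q ^ 3)
    (T : PGPoint K) (hT : T ∈ linf K)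
    (ℓ : Set (PGPoint K)) (hℓ : IsSubline F q ℓ) (hℓinf : ℓ ⊆ linf K) (hTℓ : T ∈ ℓ) :
    {S : Set (PGPoint K) | IsTangentSplash F S T ∧ ℓ ⊆ S}.ncard = q + 1 := by
  subst hF
  classical
  obtain ⟨u, h⟩ : ∃ u, Frame_s14 T.rep u := exists_frame_s14 _ T.rep_nonzero hT
  have hTc : T = ctr h := (Projectivization.mk_rep T).symm
  rw [hTc] at hTℓ ⊢
  obtain ⟨c, d, hd, rfl⟩ := subline_form_s14 h hℓ hℓinf hTℓ
  have hrank : Module.finrank F K = 3 := by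
    have h1 := Module.card_eq_pow_finrank (K := F) (V := K)
    rw [hK] at h1
    exact (Nat.pow_right_injective Fintype.one_lt_card h1).symm
  have hq2 : Module.finrank F (K ⧸ Submodule.span F {d}) = 2 := by
    have := Submodule.finrank_quotient_add_finrank (Submodule.span F {d})
    rw [finrank_span_singleton hd, hrank] at this
    omega
  let N := Submodule.span F {d}
  let Φ : Projectivization F (K ⧸ N) → Set (PGPoint K) := fun P =>
    model h c (P.submodule.comap N.mkQ)
  have hmodel : ∀ (c' : K) (W : Submodule F K), model h c N ⊆ model h c' W →
      d ∈ W ∧ c - c' ∈ W := by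
    intro c' W hs
    have hs' := (model_le h).mp hs
    have h1 : c - c' ∈ W := hs' (show c - c ∈ N by simp)
    have h2 : c + d - c' ∈ W := hs' (show c + d - c ∈ N by
      rw [add_sub_cancel_left]; exact Submodule.mem_span_singleton_self d)
    refine ⟨?_, h1⟩
    have := W.sub_mem h2 h1
    rwa [show c + d - c' - (c - c') = d by ring] at this
  have hrk : ∀ W : Submodule F K, N ≤ W →
      Module.finrank F (W.map N.mkQ) + 1 = Module.finrank F W := by
    intro W hNW
    have h1 := LinearMap.finrank_range_add_finrank_ker (N.mkQ.domRestrict W)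
    rw [LinearMap.range_domRestrict, LinearMap.ker_domRestrict, Submodule.ker_mkQ] at h1
    rw [(Submodule.comapSubtypeEquivOfLe hNW).finrank_eq, finrank_span_singleton hd] at h1
    exact h1
  have hΦ : Function.Injective Φ := by
    intro P Q hPQ
    apply Projectivization.submodule_injective
    apply Submodule.comap_injective_of_surjective N.mkQ_surjective
    have h1 : ∀ A B : Submodule F K, model h c A = model h c B → A ≤ B := by
      intro A B hAB x hx
      have h2 := (model_le h).mp hAB.le
      have h3 : x + c - c ∈ B := h2 (show x + c - c ∈ A by simpa using hx)
      simpa using h3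
    exact le_antisymm (h1 _ _ hPQ) (h1 _ _ hPQ.symm)
  have hrange : {S : Set (PGPoint K) | IsTangentSplash F S (ctr h) ∧ model h c N ⊆ S} =
      Set.range Φ := by
    ext S
    constructor
    · rintro ⟨hS, hsub⟩
      obtain ⟨W, hW, c', rfl⟩ := model_of_splash h hS
      obtain ⟨hdW, hcW⟩ := hmodel c' W hsub
      have hNW : N ≤ W := (Submodule.span_singleton_le_iff_mem d W).mpr hdW
      have h1 := hrk W hNW
      refine ⟨Projectivization.mk'' (W.map N.mkQ) (by omega), ?_⟩
      simp only [Φ, Projectivization.submodule_mk'']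
      rw [Submodule.comap_map_mkQ, sup_eq_right.mpr hNW]
      unfold model
      congr 2
      ext x
      change x - c ∈ W ↔ x - c' ∈ W
      rw [← W.add_mem_iff_left hcW, sub_add_sub_cancel]
    · rintro ⟨P, rfl⟩
      have hNW : N ≤ P.submodule.comap N.mkQ := Submodule.le_comap_mkQ _ _
      refine ⟨splash_of_model h _ ?_ c, (model_le h).mpr fun x hx => hNW hx⟩
      rw [← hrk _ hNW, Submodule.map_comap_eq_of_surjective N.mkQ_surjective,
        Projectivization.finrank_submodule]
  rw [hrange, Set.ncard_range_of_injective hΦ, Projectivization.card_of_finrank_two F _ hq2,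
    Nat.card_eq_fintype_card]

end TangentSplashPaper
end

section
/- Let q be a prime power and suppose a set S of q²+1 points of ℓ∞ in PG(2,q³) is a tangent splash with centre T and also a tangent splash with centre U (i.e. S is the tangent splash of an order-q-subplane tangent to ℓ∞ at T, and also of an order-q-subplane tangent to ℓ∞ at U). Then T = U; that is, a tangent splash has a unique centre. -/
namespace TangentSplashPaper

open Projectivization

/-- the linear functional `x ↦ ∑ m i * x i` -/
def lin {k : Type*} [Field k] (m : Fin 3 → k) : (Fin 3 → k) →ₗ[k] k :=
  ∑ i, m i • LinearMap.proj i

lemma lin_apply {k : Type*} [Field k] (m x : Fin 3 → k) : lin m x = ∑ i, m i * x i := by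
  simp [lin]

lemma lin_comm {k : Type*} [Field k] (m x : Fin 3 → k) : lin m x = lin x m := by
  simp [lin_apply, mul_comm]

lemma finrank_ker_lin {k : Type*} [Field k] {m : Fin 3 → k} (hm : m ≠ 0) :
    Module.finrank k (LinearMap.ker (lin m)) = 2 := by
  have h0 : lin m ≠ 0 := by
    intro h
    apply hm
    ext i
    have := LinearMap.congr_fun h (Pi.single i 1)
    simpa [lin_apply, Pi.single_apply] using this
  have h1 := LinearMap.finrank_range_add_finrank_ker (lin m)
  have h2 : LinearMap.range (lin m) = ⊤ := LinearMap.range_eq_top.2 (LinearMap.surjective h0)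
  rw [h2, finrank_top] at h1
  simp at h1
  omega

lemma exists_ker_not_span {k : Type*} [Field k] {m : Fin 3 → k} (hm : m ≠ 0) (p : Fin 3 → k) :
    ∃ s, lin m s = 0 ∧ s ∉ Submodule.span k {p} := by
  by_contra! h
  have hle : LinearMap.ker (lin m) ≤ Submodule.span k {p} := fun s hs => h s hs
  have h1 := Submodule.finrank_mono hle
  rw [finrank_ker_lin hm] at h1
  have h2 := finrank_span_le_card (R := k) ({p} : Set (Fin 3 → k))
  simp at h2
  omega

section
variable {F K : Type*} [Field F] [Field K] [Algebra F K]

/-- coordinatewise embedding -/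
def em (K : Type*) [Field K] [Algebra F K] (p : Fin 3 → F) : Fin 3 → K :=
  fun i => algebraMap F K (p i)

lemma lin_em (m p : Fin 3 → F) : lin (em K m) (em K p) = algebraMap F K (lin m p) := by
  simp [lin_apply, em]

lemma em_ne {p : Fin 3 → F} (hp : p ≠ 0) : em K p ≠ 0 := by
  intro h
  apply hp
  ext i
  have := congrFun h i
  simpa [em] using this

lemma em_smul {p s : Fin 3 → F} (hp : p ≠ 0) {k : K} (h : em K s = k • em K p) :
    s ∈ Submodule.span F {p} := by
  obtain ⟨i, hi⟩ : ∃ i, p i ≠ 0 := by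
    by_contra! h
    exact hp (funext h)
  have hi' : algebraMap F K (p i) ≠ 0 := by simpa using hi
  have hk : k = algebraMap F K (s i / p i) := by
    have := congrFun h i
    simp only [em, Pi.smul_apply, smul_eq_mul] at this
    rw [map_div₀, this]
    field_simp
  rw [Submodule.mem_span_singleton]
  refine ⟨s i / p i, ?_⟩
  ext j
  apply (algebraMap F K).injective
  have := congrFun h j
  simp only [em, Pi.smul_apply, smul_eq_mul] at this
  rw [this, hk]
  simp

lemma mem_linf {P : PGPoint K} {x : Fin 3 → K} (hx : x ≠ 0) (h : x ∈ P.submodule) :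
    P ∈ linf K ↔ x 2 = 0 := by
  rw [Projectivization.submodule_eq, Submodule.mem_span_singleton] at h
  obtain ⟨a, rfl⟩ := h
  have : a ≠ 0 := by
    rintro rfl
    simp at hx
  simp [linf, this]

lemma mem_mk {v : Fin 3 → K} (hv : v ≠ 0) : v ∈ (Projectivization.mk K v hv).submodule := by
  rw [Projectivization.submodule_mk]
  exact Submodule.mem_span_singleton_self v

lemma rep_mem (P : PGPoint K) : P.rep ∈ P.submodule := by
  rw [Projectivization.submodule_eq]
  exact Submodule.mem_span_singleton_self _

lemma eq_of_mem {P Q : PGPoint K} {x : Fin 3 → K} (hx : x ≠ 0) (h : x ∈ P.submodule)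
    (h' : x ∈ Q.submodule) : P = Q := by
  have key : ∀ R : PGPoint K, x ∈ R.submodule → R = Projectivization.mk K x hx := by
    intro R h
    rw [Projectivization.submodule_eq, Submodule.mem_span_singleton] at h
    rw [← R.mk_rep, Projectivization.mk_eq_mk_iff']
    obtain ⟨a, rfl⟩ := h
    have : a ≠ 0 := by
      rintro rfl
      simp at hx
    exact ⟨a⁻¹, by rw [smul_smul, inv_mul_cancel₀ this, one_smul]⟩
  rw [key P h, key Q h']

variable (f : (Fin 3 → K) ≃ₗ[K] (Fin 3 → K))

lemma fem_ne {p : Fin 3 → F} (hp : p ≠ 0) : f (em K p) ≠ 0 := by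
  simpa using em_ne hp

lemma mem_plane {P : PGPoint K} : P ∈ hmap f '' basePlane F K ↔
    ∃ p : Fin 3 → F, p ≠ 0 ∧ f (em K p) ∈ P.submodule := by
  constructor
  · rintro ⟨Q, ⟨v, hv, rfl, h⟩, rfl⟩
    choose p hp using h
    have hpv : v = em K p := by
      ext i
      exact (hp i).symm
    refine ⟨p, ?_, ?_⟩
    · rintro rfl
      apply hv
      rw [hpv]
      ext i
      simp [em]
    · simp only [hmap, Projectivization.map_mk, ← hpv]
      exact mem_mk _
  · rintro ⟨p, hp, h⟩
    refine ⟨Projectivization.mk K (em K p) (em_ne hp), ⟨em K p, em_ne hp, rfl, fun i => ⟨p i, rfl⟩⟩, ?_⟩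
    refine eq_of_mem (fem_ne f hp) ?_ h
    simp only [hmap, Projectivization.map_mk]
    exact mem_mk _

lemma mem_splash {X : PGPoint K} {x : Fin 3 → K} (hx : x ≠ 0) (hX : x ∈ X.submodule) :
    X ∈ splash (hmap f '' basePlane F K) ↔
      x 2 = 0 ∧ ∃ m : Fin 3 → F, m ≠ 0 ∧ lin (em K m) (f.symm x) = 0 := by
  have hsub : ∀ (P : PGPoint K) (W : Submodule K (Fin 3 → K)) (y : Fin 3 → K), y ≠ 0 →
      y ∈ P.submodule → y ∈ W → P.submodule ≤ W := by
    intro P W y hy h1 h2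
    have : P = Projectivization.mk K y hy := eq_of_mem hy h1 (mem_mk hy)
    rw [this, Projectivization.submodule_mk, Submodule.span_singleton_le_iff_mem]
    exact h2
  rw [splash, Set.mem_ofPred_eq, mem_linf hx hX]
  refine and_congr_right fun _ => ?_
  constructor
  · rintro ⟨P, Q, hP, hQ, hne, ℓ, ⟨W, hW, rfl⟩, hPW, hQW, hXW⟩
    obtain ⟨p, hp0, hp⟩ := (mem_plane f).1 hP
    obtain ⟨r, hr0, hr⟩ := (mem_plane f).1 hQ
    have hind : LinearIndependent K ![f (em K p), f (em K r)] := by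
      rw [LinearIndependent.pair_iff' (fem_ne f hp0)]
      intro a ha
      apply hne
      refine eq_of_mem (fem_ne f hr0) ?_ hr
      rw [← ha]
      exact Submodule.smul_mem _ _ hp
    have hspan : Submodule.span K (Set.range ![f (em K p), f (em K r)]) = W := by
      apply Submodule.eq_of_le_of_finrank_eq
      · rw [Submodule.span_le]
        rintro _ ⟨i, rfl⟩
        fin_cases i
        · exact hPW hp
        · exact hQW hr
      · rw [finrank_span_eq_card hind, hW]
        simp
    have hxW : x ∈ W := hXW hX
    rw [← hspan] at hxW
    simp only [Matrix.range_cons, Matrix.range_empty, Set.union_empty, Set.singleton_union] at hxW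
    rw [Submodule.mem_span_pair] at hxW
    obtain ⟨a, b, hab⟩ := hxW
    obtain ⟨m, hm0, hm⟩ : ∃ m : Fin 3 → F, m ≠ 0 ∧ lin p m = 0 ∧ lin r m = 0 := by
      have := LinearMap.ker_ne_bot_of_finrank_lt (f := (lin p).prod (lin r)) (by simp)
      obtain ⟨m, hm, hm0⟩ := Submodule.exists_mem_ne_zero_of_ne_bot this
      exact ⟨m, hm0, by simpa using hm⟩
    refine ⟨m, hm0, ?_⟩
    rw [← hab]
    simp [lin_em, lin_comm m, hm]
  · rintro ⟨m, hm0, hm⟩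
    obtain ⟨p, hp, hp0⟩ := exists_ker_not_span hm0 0
    obtain ⟨r, hr, hrp⟩ := exists_ker_not_span hm0 p
    have hp0' : p ≠ 0 := by
      rintro rfl
      exact hp0 (Submodule.zero_mem _)
    have hr0' : r ≠ 0 := by
      rintro rfl
      exact hrp (Submodule.zero_mem _)
    refine ⟨Projectivization.mk K _ (fem_ne f hp0'), Projectivization.mk K _ (fem_ne f hr0'),
      (mem_plane f).2 ⟨p, hp0', mem_mk _⟩, (mem_plane f).2 ⟨r, hr0', mem_mk _⟩, ?_, _,
      ⟨(LinearMap.ker (lin (em K m))).map f.toLinearMap, ?_, rfl⟩, ?_, ?_, ?_⟩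
    · intro h
      rw [Eq.comm, Projectivization.mk_eq_mk_iff'] at h
      obtain ⟨a, ha⟩ := h
      apply hrp
      apply em_smul hp0' (k := a) (K := K)
      apply f.injective
      rw [map_smul, ha]
    · rw [← finrank_ker_lin (em_ne (K := K) hm0)]
      exact LinearEquiv.finrank_map_eq f _
    · refine hsub _ _ _ (fem_ne f hp0') (mem_mk _) ⟨em K p, ?_, rfl⟩
      simp [lin_em, hp]
    · refine hsub _ _ _ (fem_ne f hr0') (mem_mk _) ⟨em K r, ?_, rfl⟩
      simp [lin_em, hr]
    · exact hsub _ _ _ hx hX ⟨f.symm x, hm, by simp⟩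

lemma centre_mem {S : Set (PGPoint K)} {T : PGPoint K} (hT : IsTangentSplash F S T) : T ∈ S := by
  obtain ⟨π, ⟨f, rfl⟩, h, rfl⟩ := hT
  have hT : T ∈ hmap f '' basePlane F K ∩ linf K := by rw [h]; rfl
  obtain ⟨t, ht0, ht⟩ := (mem_plane f).1 hT.1
  rw [mem_splash f (fem_ne f ht0) ht]
  refine ⟨(mem_linf (fem_ne f ht0) ht).1 hT.2, ?_⟩
  obtain ⟨s, hs, hs0⟩ := exists_ker_not_span ht0 0
  refine ⟨s, ?_, by simp [lin_em, lin_comm s, hs]⟩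
  rintro rfl
  exact hs0 (Submodule.zero_mem _)

lemma structure_lemma {S : Set (PGPoint K)} {T U : PGPoint K} (hT : IsTangentSplash F S T)
    (hU : U ∈ S) (hne : T ≠ U) : ∃ V : Submodule F K, Module.finrank F V = 2 ∧
      ∀ v : K, v ∈ V ↔ ∃ P ∈ S, v • T.rep + U.rep ∈ P.submodule := by
  obtain ⟨π, ⟨f, rfl⟩, h, rfl⟩ := hT
  have hT : T ∈ hmap f '' basePlane F K ∩ linf K := by rw [h]; rfl
  obtain ⟨t, ht0, ht⟩ := (mem_plane f).1 hT.1
  obtain ⟨c, hc⟩ : ∃ c : K, c • f (em K t) = T.rep := by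
    have : T = Projectivization.mk K _ (fem_ne f ht0) := eq_of_mem (fem_ne f ht0) ht (mem_mk _)
    have h2 := rep_mem T
    rw [this, Projectivization.submodule_mk, Submodule.mem_span_singleton, ← this] at h2
    exact h2
  have hc0 : c ≠ 0 := by
    rintro rfl
    exact T.rep_nonzero (by rw [← hc, zero_smul])
  have hT2 : T.rep 2 = 0 := hT.2
  obtain ⟨hU2, m₀, hm₀, hmU⟩ := (mem_splash f U.rep_nonzero (rep_mem U)).1 hU
  set y := f.symm U.rep with hy
  have hfy : f y = U.rep := by simp [hy]
  have hind : LinearIndependent K ![em K t, y] := by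
    rw [LinearIndependent.pair_iff' (em_ne ht0)]
    intro a ha
    apply hne
    refine eq_of_mem U.rep_nonzero ?_ (rep_mem U)
    rw [← hfy, ← ha, map_smul]
    exact Submodule.smul_mem _ _ ht
  -- key: a functional over `F` vanishing at both is zero
  have key : ∀ n : Fin 3 → F, lin t n = 0 → lin (em K n) y = 0 → n = 0 := by
    intro n hn1 hn2
    by_contra hn0
    have hspan : Submodule.span K (Set.range ![em K t, y]) = LinearMap.ker (lin (em K n)) := by
      apply Submodule.eq_of_le_of_finrank_eq
      · rw [Submodule.span_le]
        rintro _ ⟨i, rfl⟩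
        fin_cases i
        · simp [lin_em, lin_comm n, hn1]
        · simpa using hn2
      · rw [finrank_span_eq_card hind, finrank_ker_lin (em_ne hn0)]
        simp
    obtain ⟨s, hs, hst⟩ := exists_ker_not_span hn0 t
    have hs0 : s ≠ 0 := by
      rintro rfl
      exact hst (Submodule.zero_mem _)
    have hsk : em K s ∈ LinearMap.ker (lin (em K n)) := by simp [lin_em, hs]
    rw [← hspan] at hsk
    simp only [Matrix.range_cons, Matrix.range_empty, Set.union_empty, Set.singleton_union] at hsk
    rw [Submodule.mem_span_pair] at hsk
    obtain ⟨a, b, hab⟩ := hsk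
    have hft : f (em K t) 2 = 0 := (mem_linf (fem_ne f ht0) ht).1 hT.2
    have hPT : Projectivization.mk K _ (fem_ne f hs0) ∈ hmap f '' basePlane F K ∩ linf K := by
      refine ⟨(mem_plane f).2 ⟨s, hs0, mem_mk _⟩, ?_⟩
      rw [mem_linf (fem_ne f hs0) (mem_mk _), ← hab]
      simp [hfy, hU2, hft]
    rw [h, Set.mem_singleton_iff] at hPT
    have : f (em K s) ∈ T.submodule := by
      rw [← hPT]
      exact mem_mk _
    have hTt : T = Projectivization.mk K _ (fem_ne f ht0) := eq_of_mem (fem_ne f ht0) ht (mem_mk _)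
    rw [hTt, Projectivization.submodule_mk, Submodule.mem_span_singleton] at this
    obtain ⟨k, hk⟩ := this
    apply hst
    apply em_smul ht0 (k := k) (K := K)
    apply f.injective
    rw [map_smul, hk]
  have hm₀t : lin t m₀ ≠ 0 := fun h => hm₀ (key m₀ h hmU)
  let ψ : (Fin 3 → F) →ₗ[F] K :=
    { toFun := fun n => -c⁻¹ * lin (em K n) y
      map_add' := by
        intro a b
        simp [lin_apply, em, add_mul, Finset.sum_add_distrib, mul_add]
      map_smul' := by
        intro a b
        simp only [lin_apply, em, Pi.smul_apply, smul_eq_mul, map_mul, RingHom.id_apply,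
          Fin.sum_univ_three]
        rw [Algebra.smul_def]
        ring }
  have hψ : ∀ n, ψ n = -c⁻¹ * lin (em K n) y := fun n => rfl
  refine ⟨(LinearMap.ker (lin t)).map ψ, ?_, ?_⟩
  · rw [← finrank_ker_lin ht0]
    have hinj : Function.Injective (ψ.domRestrict (LinearMap.ker (lin t))) := by
      rw [injective_iff_map_eq_zero]
      rintro ⟨n, hn⟩ h0
      have h1 : ψ n = 0 := h0
      rw [hψ] at h1
      have h2 : lin (em K n) y = 0 := by simpa [hc0] using h1
      exact Subtype.ext (key n hn h2)
    rw [← LinearMap.finrank_range_of_inj hinj, LinearMap.range_domRestrict]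
  · intro v
    have hx0 : v • T.rep + U.rep ≠ 0 := by
      intro h0
      apply hne
      refine eq_of_mem U.rep_nonzero ?_ (rep_mem U)
      rw [show U.rep = (-v) • T.rep by
        rw [neg_smul]; exact (neg_eq_of_add_eq_zero_right h0).symm]
      exact Submodule.smul_mem _ _ (rep_mem T)
    have hx : f.symm (v • T.rep + U.rep) = (v * c) • em K t + y := by
      rw [← hc]
      simp [hy, smul_smul]
    have hlin : ∀ m : Fin 3 → F, lin (em K m) (f.symm (v • T.rep + U.rep)) =
        v * c * algebraMap F K (lin t m) + lin (em K m) y := by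
      intro m
      rw [hx, map_add, map_smul, lin_em, lin_comm m, smul_eq_mul]
    have hadd : ∀ (a b : F) (m n : Fin 3 → F), lin (em K (a • m + b • n)) y =
        algebraMap F K a * lin (em K m) y + algebraMap F K b * lin (em K n) y := by
      intro a b m n
      simp only [lin_apply, em, Pi.add_apply, Pi.smul_apply, smul_eq_mul, map_mul, map_add,
        Fin.sum_univ_three]
      ring
    constructor
    · rintro ⟨n, hn, rfl⟩
      refine ⟨Projectivization.mk K _ hx0, ?_, mem_mk _⟩
      rw [mem_splash f hx0 (mem_mk _)]
      refine ⟨by simp [hT2, hU2], (lin t m₀)⁻¹ • m₀ + (1 : F) • n, ?_, ?_⟩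
      · intro h0
        have := congrArg (lin t) h0
        have hn' : lin t n = 0 := hn
        simp [hn', hm₀t] at this
      · have hn' : lin t n = 0 := hn
        rw [hlin, hadd, hmU, hψ]
        simp [hn', hm₀t]
        field_simp
        ring
    · rintro ⟨P, hP, hvP⟩
      obtain ⟨-, m, hm0, hm⟩ := (mem_splash f hx0 hvP).1 hP
      rw [hlin] at hm
      have hmt : lin t m ≠ 0 := by
        intro h0
        apply hm0
        apply key m h0
        simpa [h0] using hm
      have hmt' : algebraMap F K (lin t m) ≠ 0 := by simpa using hmt
      refine ⟨(lin t m)⁻¹ • m + (-(lin t m₀)⁻¹) • m₀, ?_, ?_⟩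
      · simp [hmt, hm₀t]
      · rw [hψ, hadd, hmU, eq_neg_of_add_eq_zero_right hm, map_inv₀]
        field_simp
        ring
end

/-- a tangent splash has a unique centre: if a set `S` of `q²+1`
points of `ℓ∞` is a tangent splash with centre `T` and also with centre `U`,
then `T = U`. -/
theorem statement17 (q : ℕ) (F K : Type) [Field F] [Field K] [Fintype F] [Fintype K]
    [Algebra F K] (hF : Fintype.card F = q) (hK : Fintype.card K = q ^ 3)
    (S : Set (PGPoint K)) (hcard : S.ncard = q ^ 2 + 1) (T U : PGPoint K)
    (hT : IsTangentSplash F S T) (hU : IsTangentSplash F S U) :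
    T = U := by
  by_contra hne
  have hfr : Module.finrank F K = 3 := by
    have h1 := Module.card_eq_pow_finrank (K := F) (V := K)
    rw [hK, hF] at h1
    have h2 : 1 < q := hF ▸ Fintype.one_lt_card
    exact (Nat.pow_right_injective h2 h1).symm
  obtain ⟨V, hV2, hV⟩ := structure_lemma hT (centre_mem hU) hne
  obtain ⟨V', hV2', hV'⟩ := structure_lemma hU (centre_mem hT) (Ne.symm hne)
  have hinv : ∀ v ∈ V, v ≠ 0 → v⁻¹ ∈ V' := by
    intro v hv hv0
    obtain ⟨P, hP, h⟩ := (hV v).1 hv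
    refine (hV' _).2 ⟨P, hP, ?_⟩
    have := Submodule.smul_mem _ v⁻¹ h
    rw [smul_add, smul_smul, inv_mul_cancel₀ hv0, one_smul, add_comm] at this
    exact this
  let b := Module.finBasisOfFinrankEq F V hV2
  obtain ⟨α, hα⟩ : ∃ α : K, α = (b 0 : K) := ⟨_, rfl⟩
  obtain ⟨β, hβ⟩ : ∃ β : K, β = (b 1 : K) := ⟨_, rfl⟩
  have hαV : α ∈ V := hα ▸ (b 0).2
  have hβV : β ∈ V := hβ ▸ (b 1).2
  have hind : ∀ x y : F, x • α + y • β = 0 → x = 0 ∧ y = 0 := by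
    have h := b.linearIndependent
    intro x y hxy
    have h2 := Fintype.linearIndependent_iff.1 h ![x, y] (by
      apply Subtype.ext
      simpa [Fin.sum_univ_two, ← hα, ← hβ] using hxy)
    exact ⟨h2 0, h2 1⟩
  have hα0 : α ≠ 0 := by
    intro h
    have := hind 1 0 (by simp [h])
    simp at this
  have hβ0 : β ≠ 0 := by
    intro h
    have := hind 0 1 (by simp [h])
    simp at this
  have hαβ0 : α + β ≠ 0 := by
    intro h
    have := hind 1 1 (by simp [h])
    simp at this
  have hind' : LinearIndependent F ![α⁻¹, β⁻¹] := by
    rw [LinearIndependent.pair_iff]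
    intro x y hxy
    rw [Algebra.smul_def, Algebra.smul_def] at hxy
    have := hind y x (by
      rw [Algebra.smul_def, Algebra.smul_def]
      field_simp at hxy
      linear_combination hxy)
    exact ⟨this.2, this.1⟩
  have hspan : Submodule.span F (Set.range ![α⁻¹, β⁻¹]) = V' := by
    apply Submodule.eq_of_le_of_finrank_eq
    · rw [Submodule.span_le]
      rintro _ ⟨i, rfl⟩
      fin_cases i
      · exact hinv α hαV hα0
      · exact hinv β hβV hβ0
    · rw [finrank_span_eq_card hind', hV2']
      simp
  have hmem := hinv _ (V.add_mem hαV hβV) hαβ0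
  rw [← hspan] at hmem
  simp only [Matrix.range_cons, Matrix.range_empty, Set.union_empty, Set.singleton_union] at hmem
  rw [Submodule.mem_span_pair] at hmem
  obtain ⟨x, y, hxy⟩ := hmem
  rw [Algebra.smul_def, Algebra.smul_def] at hxy
  obtain ⟨t, ht⟩ : ∃ t : K, t = α / β := ⟨_, rfl⟩
  have hαt : α = t * β := by rw [ht]; field_simp
  have hquad : algebraMap F K y * t ^ 2 + (algebraMap F K x + algebraMap F K y - 1) * t
      + algebraMap F K x = 0 := by
    rw [ht]
    field_simp at hxy ⊢
    linear_combination hxy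
  have htF : ∀ z : F, algebraMap F K z ≠ t := by
    intro z hz
    have := hind 1 (-z) (by
      rw [hαt, ← hz]
      simp [Algebra.smul_def])
    simp at this
  open Polynomial in
  let p : F[X] := C y * X ^ 2 + C (x + y - 1) * X + C x
  have hp0 : p ≠ 0 := by
    intro h
    have h0 := congrArg (fun r => Polynomial.coeff r 0) h
    have h1 := congrArg (fun r => Polynomial.coeff r 1) h
    have h2 := congrArg (fun r => Polynomial.coeff r 2) h
    simp [p, Polynomial.coeff_X, Polynomial.coeff_C, Polynomial.coeff_one] at h0 h1 h2
    simp [h0, h2] at h1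
  have hpt : Polynomial.aeval t p = 0 := by
    simpa [p] using hquad
  have hdeg : p.natDegree ≤ 2 := by
    simp only [p]
    compute_degree
  have hmin := Polynomial.natDegree_le_of_dvd (minpoly.dvd F t hpt) hp0
  have hint : IsIntegral F t := Algebra.IsIntegral.isIntegral t
  have hdvd : (minpoly F t).natDegree ∣ 3 := hfr ▸ minpoly.degree_dvd hint
  rcases (Nat.dvd_prime Nat.prime_three).1 hdvd with h1 | h3
  · rw [minpoly.natDegree_eq_one_iff] at h1
    obtain ⟨z, hz⟩ := h1
    exact htF z hz
  · omega


end TangentSplashPaper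
end
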